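/- For all positive integers k and w there exists a number p = p(k,w) such that every 2-connected graph of tree-width less than w and path-width at least p has a minor isomorphic to 𝒫_k or a minor isomorphic to 𝒬_k. -/

import Mathlib

/-!
Common definitions: minors, widths, connectivity, the specific graphs
`K4`, `K23`, `C32`, `graphA`, the binary trees `CT_h`, the graphs `𝒫_k`, `𝒬_k`,
the trees `T_h`, homeomorphic embeddings, cascades, and related notions,
following Dang--Thomas, "Minors of two-connected graphs of large path-width".
-/

open SimpleGraph

/-- A minor model of `H` in `G`: branch sets `f w` are nonempty, connected,
pairwise disjoint, and edges of `H` are realized by edges of `G` between branch sets. -/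
def IsMinorModel {W V : Type*} (H : SimpleGraph W) (G : SimpleGraph V) (f : W → Set V) : Prop :=
  (∀ w, (f w).Nonempty) ∧
  (∀ w, (G.induce (f w)).Connected) ∧
  (∀ w₁ w₂ : W, w₁ ≠ w₂ → Disjoint (f w₁) (f w₂)) ∧
  (∀ w₁ w₂ : W, H.Adj w₁ w₂ → ∃ v₁ ∈ f w₁, ∃ v₂ ∈ f w₂, G.Adj v₁ v₂)

/-- `H` is (isomorphic to) a minor of `G`. -/
def IsMinor {W V : Type*} (H : SimpleGraph W) (G : SimpleGraph V) : Prop :=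
  ∃ f : W → Set V, IsMinorModel H G f

/-- The complete graph on four vertices. -/
def K4 : SimpleGraph (Fin 4) := ⊤

/-- The complete bipartite graph `K_{2,3}`. -/
def K23 : SimpleGraph (Fin 2 ⊕ Fin 3) := completeBipartiteGraph (Fin 2) (Fin 3)

/-- The graph `A`: a cycle `a₁a₂a₃a₄a₅a₆a₁` plus the edges `a₁a₃`, `a₃a₅`, `a₅a₁`. -/
def graphA : SimpleGraph (Fin 6) :=
  SimpleGraph.fromEdgeSet
    {s(0, 1), s(1, 2), s(2, 3), s(3, 4), s(4, 5), s(5, 0), s(0, 2), s(2, 4), s(4, 0)}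

/-- The graph `C_{3,2}`: two disjoint triangles. -/
def C32 : SimpleGraph (Fin 2 × Fin 3) :=
  SimpleGraph.fromRel (fun u v => u.1 = v.1)

/-- A graph is outerplanar iff it has no `K₄` minor and no `K_{2,3}` minor
(the classical characterization of outerplanarity). -/
def Outerplanar {V : Type*} (G : SimpleGraph V) : Prop :=
  ¬ IsMinor K4 G ∧ ¬ IsMinor K23 G

/-- `G` is `k`-connected: it has more than `k` vertices and deleting fewer than `k`
vertices leaves a connected graph. -/
def IsKConnected {V : Type*} [Fintype V] (k : ℕ) (G : SimpleGraph V) : Prop :=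
  k + 1 ≤ Fintype.card V ∧
  ∀ S : Finset V, S.card < k → (G.induce ((↑S : Set V)ᶜ)).Connected

/-- `(Tr, X)` is a tree-decomposition of `G`: `Tr` is a tree, the bags `X t` cover all
vertices and edges (W1), and whenever `t₂` lies on the path of `Tr` between `t₁` and `t₃`
we have `X t₁ ∩ X t₃ ⊆ X t₂` (W2). -/
def IsTreeDecomp {V T : Type*} (G : SimpleGraph V) (Tr : SimpleGraph T) (X : T → Finset V) :
    Prop :=
  Tr.IsTree ∧
  (∀ v : V, ∃ t, v ∈ X t) ∧
  (∀ u v : V, G.Adj u v → ∃ t, u ∈ X t ∧ v ∈ X t) ∧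
  (∀ (t₁ t₂ t₃ : T) (p : Tr.Walk t₁ t₃), p.IsPath → t₂ ∈ p.support →
    ∀ v : V, v ∈ X t₁ → v ∈ X t₃ → v ∈ X t₂)

/-- A path-decomposition of `G`, with bags indexed by `Fin n`. -/
def IsPathDecomp {V : Type*} (G : SimpleGraph V) {n : ℕ} (X : Fin n → Finset V) : Prop :=
  (∀ v : V, ∃ i, v ∈ X i) ∧
  (∀ u v : V, G.Adj u v → ∃ i, u ∈ X i ∧ v ∈ X i) ∧
  (∀ i j k : Fin n, i ≤ j → j ≤ k → ∀ v : V, v ∈ X i → v ∈ X k → v ∈ X j)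

/-- The path-width of a finite graph: the least `w` such that `G` has a
path-decomposition all of whose bags have at most `w + 1` vertices. -/
noncomputable def pathwidth {V : Type*} [Fintype V] (G : SimpleGraph V) : ℕ :=
  sInf {w | ∃ (n : ℕ) (X : Fin n → Finset V), IsPathDecomp G X ∧ ∀ i, (X i).card ≤ w + 1}

/-- The tree-width of a finite graph: the least `w` such that `G` has a
tree-decomposition all of whose bags have at most `w + 1` vertices. -/
noncomputable def treewidth {V : Type*} [Fintype V] (G : SimpleGraph V) : ℕ :=
  sInf {w | ∃ (T : Type) (_ : Fintype T) (Tr : SimpleGraph T) (X : T → Finset V),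
    IsTreeDecomp G Tr X ∧ ∀ t, (X t).card ≤ w + 1}

/-- Vertices of the binary tree `CT_h`: paths from the root, recorded as reversed
lists of left/right moves, of length at most `h`. -/
abbrev CTVert (h : ℕ) := {l : List Bool // l.length ≤ h}

/-- The binary tree `CT_h` of height `h`. -/
def CTgraph (h : ℕ) : SimpleGraph (CTVert h) :=
  SimpleGraph.fromEdgeSet
    {e | ∃ (b : Bool) (σ : List Bool) (hσ : σ.length < h),
      e = s((⟨σ, le_of_lt hσ⟩ : CTVert h), (⟨b :: σ, by simpa using hσ⟩ : CTVert h))}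

/-- The graph `𝒫_k`: the binary tree `CT_k` together with one extra vertex (`none`)
adjacent to every leaf of `CT_k`. -/
def Pgraph (k : ℕ) : SimpleGraph (Option (CTVert k)) :=
  SimpleGraph.fromEdgeSet
    ({e | ∃ (b : Bool) (σ : List Bool) (hσ : σ.length < k),
        e = s(some (⟨σ, le_of_lt hσ⟩ : CTVert k), some (⟨b :: σ, by simpa using hσ⟩ : CTVert k))} ∪
     {e | ∃ l : CTVert k, l.1.length = k ∧ e = s(none, some l)})

/-- Vertices of `𝒬_k`: the two base vertices of the root triangle (`Sum.inl false` and
`Sum.inl true`), together with one apex vertex for each node of the complete binary tree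
of depth `< k` (recorded as a reversed list of moves). -/
abbrev QVert (k : ℕ) := Bool ⊕ {l : List Bool // l.length < k}

/-- The two ends of the base edge of the copy of the triangle at node `σ` of `𝒬_k`. -/
def qbase (k : ℕ) : List Bool → QVert k × QVert k
  | [] => (Sum.inl false, Sum.inl true)
  | b :: σ =>
      ((if b then (qbase k σ).2 else (qbase k σ).1),
        if h : σ.length < k then Sum.inr ⟨σ, h⟩ else Sum.inl false)

/-- The graph `𝒬_k`, built from triangles as in the recursive definition: the triangle at
node `σ` consists of the base edge `qbase k σ` together with the apex vertex `Sum.inr σ`;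
the base edge of `𝒬_k` is `s(Sum.inl false, Sum.inl true)`. -/
def Qgraph (k : ℕ) : SimpleGraph (QVert k) :=
  SimpleGraph.fromEdgeSet
    ({s(Sum.inl false, Sum.inl true)} ∪
     {e | ∃ (σ : List Bool) (h : σ.length < k),
        e = s(Sum.inr ⟨σ, h⟩, (qbase k σ).1) ∨ e = s(Sum.inr ⟨σ, h⟩, (qbase k σ).2)})

/-- The minor vertices of the tree `T_h` (one for each string of length `≤ h`). -/
abbrev MVert (h : ℕ) := {l : List Bool // l.length ≤ h}

/-- The major vertices of the tree `T_h` (one for each string of length `≤ h - 1`). -/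
abbrev JVert (h : ℕ) := {l : List Bool // l.length + 1 ≤ h}

/-- Vertices of the tree `T_h` (obtained from `CT_h` by subdividing every edge not incident
with a degree-one vertex and adding the minor root). -/
abbrev TVert (h : ℕ) := MVert h ⊕ JVert h

/-- The tree `T_h`: each major vertex `σ` is adjacent to the minor vertices `σ` (its parent),
`false :: σ` (its left neighbor) and `true :: σ` (its right neighbor). -/
def Tgraph (h : ℕ) : SimpleGraph (TVert h) :=
  SimpleGraph.fromEdgeSet
    {e | ∃ (σ : List Bool) (hσ : σ.length + 1 ≤ h),
      e = s(Sum.inr ⟨σ, hσ⟩, Sum.inl ⟨σ, Nat.le_of_succ_le hσ⟩) ∨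
      ∃ b : Bool, e = s(Sum.inr ⟨σ, hσ⟩, Sum.inl ⟨b :: σ, by simpa using hσ⟩)}

/-- A homeomorphic embedding of `TA` into `TB`: an injection such that for any two edges of
`TA` sharing an end `t`, the corresponding paths of `TB` are edge-disjoint. -/
def IsHomeoEmb {A B : Type*} (TA : SimpleGraph A) (TB : SimpleGraph B) (η : A → B) : Prop :=
  Function.Injective η ∧
  ∀ ⦃t t₁ t₂ : A⦄, TA.Adj t t₁ → TA.Adj t t₂ → t₁ ≠ t₂ →
    ∀ (p₁ : TB.Walk (η t) (η t₁)) (p₂ : TB.Walk (η t) (η t₂)),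
      p₁.IsPath → p₂.IsPath → ∀ e ∈ p₁.edges, e ∉ p₂.edges

/-- `v` lies in the span of `η`: it lies on a path of `TB` between two vertices in the
image of `η`. -/
def inSpan {A B : Type*} (TB : SimpleGraph B) (η : A → B) (v : B) : Prop :=
  ∃ (a₁ a₂ : A) (p : TB.Walk (η a₁) (η a₂)), p.IsPath ∧ v ∈ p.support

/-- A cascade of height `h` and size `s` in the tree-decomposition `(Tr, X)`:
a homeomorphic embedding of `T_h` with `|X (η t)| = s` for every minor vertex `t`
and `|X t| ≥ s` for every `t` in the span. -/
def IsCascade {V T : Type*} (Tr : SimpleGraph T) (X : T → Finset V) (h s : ℕ)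
    (η : TVert h → T) : Prop :=
  IsHomeoEmb (Tgraph h) Tr η ∧
  (∀ l : MVert h, (X (η (Sum.inl l))).card = s) ∧
  (∀ t : T, inSpan Tr η t → s ≤ (X t).card)

/-- An injective cascade with common intersection set `I`. -/
def IsInjectiveCascade {V T : Type*} (Tr : SimpleGraph T) (X : T → Finset V) (h s : ℕ)
    (η : TVert h → T) (I : Finset V) : Prop :=
  IsCascade Tr X h s η ∧ I.card < s ∧
  ∀ t t' : TVert h, t ≠ t' → ((X (η t) : Set V) ∩ (X (η t') : Set V)) = (I : Set V)

/-- A family of `s` disjoint paths in `G \ I` (a linkage). -/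
def IsLinkage {V : Type*} (G : SimpleGraph V) (I : Finset V) {s : ℕ} {x y : Fin s → V}
    (P : ∀ i : Fin s, G.Walk (x i) (y i)) : Prop :=
  (∀ i, (P i).IsPath) ∧
  (∀ i, ∀ v ∈ (P i).support, v ∉ I) ∧
  (∀ i j, i ≠ j → ∀ v ∈ (P i).support, v ∉ (P j).support)

/-- An ordered cascade: an injective cascade of size `s + |I|` with common intersection set
`I`, together with orderings `ξ t : Fin s → X (η t) \ I` of the bags at minor vertices, such
that at every major vertex there are left and right linkages connecting corresponding
vertices. -/
def IsOrderedCascade {V T : Type*} (G : SimpleGraph V) (Tr : SimpleGraph T)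
    (X : T → Finset V) (h s : ℕ) (η : TVert h → T) (I : Finset V)
    (ξ : MVert h → Fin s → V) : Prop :=
  IsInjectiveCascade Tr X h (s + I.card) η I ∧
  (∀ t : MVert h, Function.Injective (ξ t) ∧
    Set.range (ξ t) = (X (η (Sum.inl t)) : Set V) \ (I : Set V)) ∧
  ∀ (σ : List Bool) (hσ : σ.length + 1 ≤ h),
    (∃ P : ∀ i : Fin s,
        G.Walk (ξ ⟨σ, Nat.le_of_succ_le hσ⟩ i) (ξ ⟨false :: σ, by simpa using hσ⟩ i),
      IsLinkage G I P) ∧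
    (∃ Q : ∀ i : Fin s,
        G.Walk (ξ ⟨σ, Nat.le_of_succ_le hσ⟩ i) (ξ ⟨true :: σ, by simpa using hσ⟩ i),
      IsLinkage G I Q)

/-- The vertex set of the `η`-torso at the major vertex `σ` of `T_h`: the union of the bags
`X t - I` over all `t` such that the path in `Tr` from `t` to `η σ` contains none of the
images of the three minor neighbors of `σ` as an internal vertex. -/
def torsoSet {V T : Type*} (Tr : SimpleGraph T) (X : T → Finset V) {h : ℕ}
    (η : TVert h → T) (I : Finset V) (σ : List Bool) (hσ : σ.length + 1 ≤ h) : Set V :=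
  {v | v ∉ I ∧ ∃ t : T,
    (∀ p : Tr.Walk t (η (Sum.inr ⟨σ, hσ⟩)), p.IsPath →
      ∀ u : T,
        (u = η (Sum.inl ⟨σ, Nat.le_of_succ_le hσ⟩) ∨
         u = η (Sum.inl ⟨false :: σ, by simpa using hσ⟩) ∨
         u = η (Sum.inl ⟨true :: σ, by simpa using hσ⟩)) →
        u ∈ p.support → u = t ∨ u = η (Sum.inr ⟨σ, hσ⟩)) ∧
    v ∈ X t}

/-- `H` is a tripod in `G` with all vertices in `S`, center `c` and feet `f₁, f₂, f₃`:
the union of three paths from `c` to the feet, pairwise disjoint except for `c`,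
at least two of which have length at least one. -/
def IsTripodOn {V : Type*} (G : SimpleGraph V) (S : Set V) (H : G.Subgraph)
    (c f₁ f₂ f₃ : V) : Prop :=
  ∃ (W₁ : G.Walk c f₁) (W₂ : G.Walk c f₂) (W₃ : G.Walk c f₃),
    W₁.IsPath ∧ W₂.IsPath ∧ W₃.IsPath ∧
    (∀ v ∈ W₁.support, v ∈ S) ∧ (∀ v ∈ W₂.support, v ∈ S) ∧ (∀ v ∈ W₃.support, v ∈ S) ∧
    (∀ v, v ∈ W₁.support → v ∈ W₂.support → v = c) ∧
    (∀ v, v ∈ W₁.support → v ∈ W₃.support → v = c) ∧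
    (∀ v, v ∈ W₂.support → v ∈ W₃.support → v = c) ∧
    ((1 ≤ W₁.length ∧ 1 ≤ W₂.length) ∨ (1 ≤ W₁.length ∧ 1 ≤ W₃.length) ∨
      (1 ≤ W₂.length ∧ 1 ≤ W₃.length)) ∧
    H = W₁.toSubgraph ⊔ W₂.toSubgraph ⊔ W₃.toSubgraph

/-- The major vertex `σ` has property `A_{ij}` in the ordered cascade `η` with orderings
`ξ`: there are two disjoint tripods in the `η`-torso at `σ`, with feet as prescribed. -/
def HasPropA {V T : Type*} (G : SimpleGraph V) (Tr : SimpleGraph T) (X : T → Finset V)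
    {h s : ℕ} (η : TVert h → T) (I : Finset V) (ξ : MVert h → Fin s → V)
    (σ : List Bool) (hσ : σ.length + 1 ≤ h) (i j : Fin s) : Prop :=
  ∃ (Li Lj : G.Subgraph) (ci cj : V),
    (∃ m₂ m₃ : Fin s, (m₂ = i ∨ m₂ = j) ∧ (m₃ = i ∨ m₃ = j) ∧
      IsTripodOn G (torsoSet Tr X η I σ hσ) Li ci
        (ξ ⟨σ, Nat.le_of_succ_le hσ⟩ i)
        (ξ ⟨false :: σ, by simpa using hσ⟩ m₂)
        (ξ ⟨true :: σ, by simpa using hσ⟩ m₃)) ∧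
    (∃ m₂ m₃ : Fin s, (m₂ = i ∨ m₂ = j) ∧ (m₃ = i ∨ m₃ = j) ∧
      IsTripodOn G (torsoSet Tr X η I σ hσ) Lj cj
        (ξ ⟨σ, Nat.le_of_succ_le hσ⟩ j)
        (ξ ⟨false :: σ, by simpa using hσ⟩ m₂)
        (ξ ⟨true :: σ, by simpa using hσ⟩ m₃)) ∧
    Disjoint Li.verts Lj.verts

/-- The major vertex `σ` has property `B_{ij}`: there are two tripods `L_i`, `L_j` in the
`η`-torso at `σ`, with feet `v_{m,1}, v_{m,2}, v_{m,3}` where `{v_{i,y}, v_{j,y}}` equals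
`{ξ_{t_y} i, ξ_{t_y} j}` for each `y`, which intersect exactly in a path that is the
intersection of the branch of `L_i` to `v_{i,3}` and the branch of `L_j` to `v_{j,2}`,
and which avoids both centers. -/
def HasPropB {V T : Type*} (G : SimpleGraph V) (Tr : SimpleGraph T) (X : T → Finset V)
    {h s : ℕ} (η : TVert h → T) (I : Finset V) (ξ : MVert h → Fin s → V)
    (σ : List Bool) (hσ : σ.length + 1 ≤ h) (i j : Fin s) : Prop :=
  ∃ (vi vj : Fin 3 → V) (ci cj : V)
    (Wi : ∀ y : Fin 3, G.Walk ci (vi y)) (Wj : ∀ y : Fin 3, G.Walk cj (vj y)),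
    (∀ y : Fin 3, ({vi y, vj y} : Set V) =
      {(![ξ ⟨σ, Nat.le_of_succ_le hσ⟩,
          ξ ⟨false :: σ, by simpa using hσ⟩,
          ξ ⟨true :: σ, by simpa using hσ⟩] : Fin 3 → Fin s → V) y i,
       (![ξ ⟨σ, Nat.le_of_succ_le hσ⟩,
          ξ ⟨false :: σ, by simpa using hσ⟩,
          ξ ⟨true :: σ, by simpa using hσ⟩] : Fin 3 → Fin s → V) y j}) ∧
    (∀ y, (Wi y).IsPath) ∧ (∀ y, (Wj y).IsPath) ∧
    (∀ y, ∀ v ∈ (Wi y).support, v ∈ torsoSet Tr X η I σ hσ) ∧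
    (∀ y, ∀ v ∈ (Wj y).support, v ∈ torsoSet Tr X η I σ hσ) ∧
    (∀ y y' : Fin 3, y ≠ y' → ∀ v, v ∈ (Wi y).support → v ∈ (Wi y').support → v = ci) ∧
    (∀ y y' : Fin 3, y ≠ y' → ∀ v, v ∈ (Wj y).support → v ∈ (Wj y').support → v = cj) ∧
    ((1 ≤ (Wi 0).length ∧ 1 ≤ (Wi 1).length) ∨ (1 ≤ (Wi 0).length ∧ 1 ≤ (Wi 2).length) ∨
      (1 ≤ (Wi 1).length ∧ 1 ≤ (Wi 2).length)) ∧
    ((1 ≤ (Wj 0).length ∧ 1 ≤ (Wj 1).length) ∨ (1 ≤ (Wj 0).length ∧ 1 ≤ (Wj 2).length) ∨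
      (1 ≤ (Wj 1).length ∧ 1 ≤ (Wj 2).length)) ∧
    (((Wi 0).toSubgraph ⊔ (Wi 1).toSubgraph ⊔ (Wi 2).toSubgraph) ⊓
      ((Wj 0).toSubgraph ⊔ (Wj 1).toSubgraph ⊔ (Wj 2).toSubgraph)
        = (Wi 2).toSubgraph ⊓ (Wj 1).toSubgraph) ∧
    ∃ (x y : V) (p : G.Walk x y), p.IsPath ∧
      (Wi 2).toSubgraph ⊓ (Wj 1).toSubgraph = p.toSubgraph ∧
      ci ∉ p.support ∧ cj ∉ p.support

/-- The major vertex `σ` has property `AB_{ij}`: in the `η`-torso at `σ` there are disjoint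
paths `L_i, L_j` from `ξ_{t₁}(m)` to `ξ_{t₂}(m)` and disjoint paths `R_i, R_j` from
`ξ_{t₁}(m)` to `ξ_{t₃}(m)`, for `m ∈ {i, j}`. -/
def HasPropAB {V T : Type*} (G : SimpleGraph V) (Tr : SimpleGraph T) (X : T → Finset V)
    {h s : ℕ} (η : TVert h → T) (I : Finset V) (ξ : MVert h → Fin s → V)
    (σ : List Bool) (hσ : σ.length + 1 ≤ h) (i j : Fin s) : Prop :=
  ∃ (Li : G.Walk (ξ ⟨σ, Nat.le_of_succ_le hσ⟩ i) (ξ ⟨false :: σ, by simpa using hσ⟩ i))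
    (Lj : G.Walk (ξ ⟨σ, Nat.le_of_succ_le hσ⟩ j) (ξ ⟨false :: σ, by simpa using hσ⟩ j))
    (Ri : G.Walk (ξ ⟨σ, Nat.le_of_succ_le hσ⟩ i) (ξ ⟨true :: σ, by simpa using hσ⟩ i))
    (Rj : G.Walk (ξ ⟨σ, Nat.le_of_succ_le hσ⟩ j) (ξ ⟨true :: σ, by simpa using hσ⟩ j)),
    Li.IsPath ∧ Lj.IsPath ∧ Ri.IsPath ∧ Rj.IsPath ∧
    (∀ v ∈ Li.support, v ∈ torsoSet Tr X η I σ hσ) ∧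
    (∀ v ∈ Lj.support, v ∈ torsoSet Tr X η I σ hσ) ∧
    (∀ v ∈ Ri.support, v ∈ torsoSet Tr X η I σ hσ) ∧
    (∀ v ∈ Rj.support, v ∈ torsoSet Tr X η I σ hσ) ∧
    (∀ v ∈ Li.support, v ∉ Lj.support) ∧
    (∀ v ∈ Ri.support, v ∉ Rj.support)

/-- A monotone homeomorphic embedding `T_a ↪ T_h`: the minor root maps to the minor root,
and for every major vertex with trinity `(t₁, t₂, t₃)`, the images of `t₂` and `t₃` are the
left and right neighbors of the (major) image of the vertex. -/
def IsMonotoneEmb (a h : ℕ) (γ : TVert a → TVert h) : Prop :=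
  IsHomeoEmb (Tgraph a) (Tgraph h) γ ∧
  γ (Sum.inl ⟨[], Nat.zero_le a⟩) = Sum.inl ⟨[], Nat.zero_le h⟩ ∧
  ∀ (σ : List Bool) (hσ : σ.length + 1 ≤ a),
    ∃ (τ : List Bool) (hτ : τ.length + 1 ≤ h),
      γ (Sum.inr ⟨σ, hσ⟩) = Sum.inr ⟨τ, hτ⟩ ∧
      γ (Sum.inl ⟨false :: σ, by simpa using hσ⟩) = Sum.inl ⟨false :: τ, by simpa using hτ⟩ ∧
      γ (Sum.inl ⟨true :: σ, by simpa using hσ⟩) = Sum.inl ⟨true :: τ, by simpa using hτ⟩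

/-!
Large path-width yields a tall binary tree minor; this is the theorem of Bienstock, Robertson,
Seymour and Thomas, and the argument used is Diestel's. Let `B` be a 2-connected vertex set
spanned by such a tree, and assume that there is no `𝒫_k` minor. A tall binary tree either contains
a tree of height `k` whose leaves all touch a prescribed connected set disjoint from it, which
gives `𝒫_k`, or contains a tall tree avoiding the neighbourhood of that set. Hence `B` contains
two disjoint 2-connected sets, each spanned by a still tall tree. Join the two terminals `a`, `b`
of `B` to either set by two disjoint paths. The two pairs of paths uncross, so that the two sets
sit between `a` and `b` either in parallel or in series. The parallel case raises the height of a
rooted version of `𝒫`, and the series case raises that of a rooted version of `𝒬`; enough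
iterations make one of the two heights reach `k`.
-/

/-! ### Connected sets -/

section Connectivity

variable {V : Type*} {G G' : SimpleGraph V} {S T A B A' B' : Set V} {u v w : V}

/-- `u` and `v` are joined by a walk of `G` all of whose vertices lie in `S`. -/
def ReachableIn (G : SimpleGraph V) (S : Set V) (u v : V) : Prop :=
  ∃ p : G.Walk u v, ∀ x ∈ p.support, x ∈ S

/-- The subgraph induced on `S` is connected; in particular `S` is nonempty. -/
def ConnectedOn (G : SimpleGraph V) (S : Set V) : Prop := (G.induce S).Connected

/-- Some edge of `G` joins a vertex of `A` to a vertex of `B`. The sets need not be disjoint. -/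
def SetAdj (G : SimpleGraph V) (A B : Set V) : Prop := ∃ u ∈ A, ∃ v ∈ B, G.Adj u v

namespace SetAdj

lemma symm (h : SetAdj G A B) : SetAdj G B A :=
  let ⟨u, hu, v, hv, huv⟩ := h
  ⟨v, hv, u, hu, huv.symm⟩

lemma mono (h : SetAdj G A B) (hA : A ⊆ A') (hB : B ⊆ B') : SetAdj G A' B' :=
  let ⟨u, hu, v, hv, huv⟩ := h
  ⟨u, hA hu, v, hB hv, huv⟩

end SetAdj

namespace ReachableIn

lemma refl (hu : u ∈ S) : ReachableIn G S u u := ⟨Walk.nil, by simpa using hu⟩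

lemma of_adj (h : G.Adj u v) (hu : u ∈ S) (hv : v ∈ S) : ReachableIn G S u v :=
  ⟨h.toWalk, by simp [hu, hv]⟩

lemma symm : ReachableIn G S u v → ReachableIn G S v u := fun ⟨p, hp⟩ =>
  ⟨p.reverse, by simpa using hp⟩

lemma trans : ReachableIn G S u v → ReachableIn G S v w → ReachableIn G S u w :=
  fun ⟨p, hp⟩ ⟨q, hq⟩ =>
    ⟨p.append q, fun x hx => ((Walk.mem_support_append_iff p q).1 hx).elim (hp x) (hq x)⟩

lemma mono (h : ReachableIn G S u v) (hST : S ⊆ T) : ReachableIn G T u v :=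
  let ⟨p, hp⟩ := h
  ⟨p, fun x hx => hST (hp x hx)⟩

lemma mono_graph (h : ReachableIn G S u v) (hG : G ≤ G') : ReachableIn G' S u v :=
  let ⟨p, hp⟩ := h
  ⟨p.mapLe hG, by simpa using hp⟩

lemma left_mem : ReachableIn G S u v → u ∈ S := fun ⟨p, hp⟩ => hp u p.start_mem_support

lemma right_mem (h : ReachableIn G S u v) : v ∈ S := h.symm.left_mem

lemma step (h : ReachableIn G S u v) (hvw : G.Adj v w) (hw : w ∈ S) : ReachableIn G S u w :=
  h.trans (of_adj hvw h.right_mem hw)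

lemma exists_boundary_adj {R : Set V} (h : ReachableIn G S u v) (hu : u ∈ R) (hv : v ∉ R) :
    ∃ x ∈ S ∩ R, ∃ y ∈ S \ R, G.Adj x y := by
  obtain ⟨p, hp⟩ := h
  obtain ⟨d, hd, hfst, hsnd⟩ := p.exists_boundary_dart R hu hv
  exact ⟨d.fst, ⟨hp _ (p.dart_fst_mem_support_of_mem_darts hd), hfst⟩,
    d.snd, ⟨hp _ (p.dart_snd_mem_support_of_mem_darts hd), hsnd⟩, d.adj⟩

lemma in_component (h : ReachableIn G S u v) :
    ReachableIn G {x | ReachableIn G S u x} u v := by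
  classical
  obtain ⟨p, hp⟩ := h
  exact ⟨p, fun x hx => ⟨p.takeUntil x hx, fun y hy =>
    hp y (p.support_takeUntil_subset_support hx hy)⟩⟩

end ReachableIn

namespace ConnectedOn

lemma nonempty (h : ConnectedOn G S) : S.Nonempty :=
  Set.nonempty_coe_sort.1 (Connected.nonempty h)

lemma reachableIn (h : ConnectedOn G S) (hu : u ∈ S) (hv : v ∈ S) : ReachableIn G S u v := by
  obtain ⟨p⟩ := Connected.preconnected h ⟨u, hu⟩ ⟨v, hv⟩
  refine ⟨p.map (Embedding.induce S).toHom, fun x hx => ?_⟩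
  obtain ⟨y, -, rfl⟩ := List.mem_map.1 (Walk.support_map (Embedding.induce S).toHom p ▸ hx)
  exact y.2

lemma of_forall_reachableIn (hu : u ∈ S) (h : ∀ v ∈ S, ReachableIn G S u v) :
    ConnectedOn G S := by
  refine G.induce_connected_of_patches u hu fun {v} hv => ?_
  obtain ⟨p, hp⟩ := h v hv
  exact ⟨{x | x ∈ p.support}, hp, p.start_mem_support, p.end_mem_support,
    p.connected_induce_support.preconnected _ _⟩

lemma walk_support (p : G.Walk u v) : ConnectedOn G {x | x ∈ p.support} :=
  p.connected_induce_support

lemma singleton (u : V) : ConnectedOn G {u} :=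
  of_forall_reachableIn rfl (by rintro v rfl; exact .refl rfl)

lemma union_of_inter_nonempty (hS : ConnectedOn G S) (hT : ConnectedOn G T)
    (h : (S ∩ T).Nonempty) : ConnectedOn G (S ∪ T) :=
  induce_union_connected (Connected.preconnected hS) (Connected.preconnected hT) h

lemma union_of_setAdj (hS : ConnectedOn G S) (hT : ConnectedOn G T) (h : SetAdj G S T) :
    ConnectedOn G (S ∪ T) :=
  let ⟨_, hu, _, hv, huv⟩ := h
  connected_induce_union (Connected.preconnected hS) (Connected.preconnected hT) hu hv huv

lemma union_iUnion_of_setAdj {ι : Sort*} {T : ι → Set V} (hS : ConnectedOn G S)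
    (hT : ∀ i, ConnectedOn G (T i)) (h : ∀ i, SetAdj G S (T i)) : ConnectedOn G (S ∪ ⋃ i, T i) := by
  obtain ⟨u, hu⟩ := hS.nonempty
  refine of_forall_reachableIn (.inl hu) fun v hv => ?_
  obtain hv | hv := hv
  · exact (hS.reachableIn hu hv).mono Set.subset_union_left
  · obtain ⟨i, hi⟩ := Set.mem_iUnion.1 hv
    exact ((hS.union_of_setAdj (hT i) (h i)).reachableIn (.inl hu) (.inr hi)).mono
      (Set.union_subset_union_right S (Set.subset_iUnion T i))

lemma mono_graph (h : ConnectedOn G S) (hG : G ≤ G') : ConnectedOn G' S :=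
  let ⟨_, hu⟩ := h.nonempty
  of_forall_reachableIn hu fun _ hv => (h.reachableIn hu hv).mono_graph hG

lemma component (hu : u ∈ S) : ConnectedOn G {x | ReachableIn G S u x} :=
  of_forall_reachableIn (.refl hu) fun _ hv => hv.in_component

lemma of_sdiff_closed (hS : ConnectedOn G S) (hA : ConnectedOn G A) (hAT : A ⊆ T) (hTS : T ⊆ S)
    (h : ∀ x ∈ T \ A, ∀ y ∈ S, G.Adj x y → y ∈ T) : ConnectedOn G T := by
  obtain ⟨u, hu⟩ := hA.nonempty
  refine of_forall_reachableIn (hAT hu) fun v hv => ReachableIn.symm ?_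
  by_contra hvu
  obtain ⟨x, ⟨-, hx⟩, y, ⟨hyS, hy⟩, hxy⟩ :=
    (hS.reachableIn (hTS hv) (hTS (hAT hu))).exists_boundary_adj
      (R := {x | ReachableIn G T v x}) (.refl hv) hvu
  have hxA : x ∉ A := fun hxA => hvu (hx.trans ((hA.reachableIn hxA hu).mono hAT))
  exact hy (ReachableIn.step hx hxy (h x ⟨hx.right_mem, hxA⟩ y hyS hxy))

end ConnectedOn

lemma ReachableIn.exists_connectedOn_first_hit (h : ReachableIn G S u v) (hv : v ∈ T) :
    ∃ q ∈ T, ∃ P ⊆ S, ConnectedOn G P ∧ u ∈ P ∧ q ∈ P ∧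
      ∀ x ∈ P, x ≠ q → ReachableIn G (S \ T) u x := by
  by_cases huT : u ∈ T
  · exact ⟨u, huT, {u}, by simpa using h.left_mem, .singleton u, rfl, rfl,
      fun x hx hne => (hne hx).elim⟩
  have hu : u ∈ S \ T := ⟨h.left_mem, huT⟩
  obtain ⟨x, ⟨-, hx⟩, q, ⟨hqS, hq⟩, hxq⟩ := h.exists_boundary_adj
    (R := {x | ReachableIn G (S \ T) u x}) (.refl hu) (fun hc => hc.right_mem.2 hv)
  have hqT : q ∈ T := by
    by_contra hqT
    exact hq (ReachableIn.step hx hxq ⟨hqS, hqT⟩)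
  refine ⟨q, hqT, {x | ReachableIn G (S \ T) u x} ∪ {q}, ?_, ?_, .inl (.refl hu), .inr rfl, ?_⟩
  · rintro z (hz | rfl)
    exacts [hz.right_mem.1, hqS]
  · exact (ConnectedOn.component hu).union_of_setAdj (.singleton q) ⟨x, hx, q, rfl, hxq⟩
  · rintro z (hz | rfl) hne
    exacts [hz, (hne rfl).elim]

end Connectivity

/-! ### Menger's theorem -/

section Menger

variable {V ι : Type*} {G G' : SimpleGraph V} {D A B : Set V} {S T : Finset V} {u v x y : V}

/-- The vertices joined to `A` by a walk inside `D`. -/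
def reachSet (G : SimpleGraph V) (D A : Set V) : Set V := {v | ∃ a ∈ A, ReachableIn G D a v}

/-- Every walk from `A` to `B` inside `D` meets `T`. The sets `A` and `B` need not be disjoint, and
`T` may contain vertices of either. -/
def Separates (G : SimpleGraph V) (D A B : Set V) (T : Finset V) : Prop :=
  Disjoint (reachSet G (D \ T) A) B

/-- A family of disjoint connected subsets of `D` each of which meets both `A` and `B`. Such a
family serves as a family of disjoint paths from `A` to `B`. -/
structure IsConnectorFamily (G : SimpleGraph V) (D A B : Set V) (P : ι → Set V) : Prop where
  subset : ∀ i, P i ⊆ D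
  connected : ∀ i, ConnectedOn G (P i)
  meets_left : ∀ i, (P i ∩ A).Nonempty
  meets_right : ∀ i, (P i ∩ B).Nonempty
  disjoint : Pairwise (Function.onFun Disjoint P)

/-- A family of disjoint connectors inside `D` from `A` onto `S`: the connector `P s` ends in `s`,
and its other vertices lie on the `A`-side of `S`. -/
structure IsFan (G : SimpleGraph V) (D A : Set V) (S : Finset V) (P : V → Set V) : Prop where
  subset : ∀ s ∈ S, P s ⊆ D
  connected : ∀ s ∈ S, ConnectedOn G (P s)
  meets : ∀ s ∈ S, (P s ∩ A).Nonempty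
  self_mem : ∀ s ∈ S, s ∈ P s
  mem_reachSet : ∀ s ∈ S, ∀ x ∈ P s, x ≠ s → x ∈ reachSet G (D \ S) A
  disjoint : (S : Set V).PairwiseDisjoint P

lemma reachSet_subset : reachSet G D A ⊆ D := fun _ ⟨_, _, h⟩ => h.right_mem

lemma reachSet_mono {D' : Set V} (h : D ⊆ D') : reachSet G D A ⊆ reachSet G D' A :=
  fun _ ⟨a, ha, hr⟩ => ⟨a, ha, hr.mono h⟩

lemma mem_reachSet_of_adj (hu : u ∈ reachSet G D A) (huv : G.Adj u v) (hv : v ∈ D) :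
    v ∈ reachSet G D A :=
  let ⟨a, ha, h⟩ := hu
  ⟨a, ha, h.step huv hv⟩

lemma reachSet_subset_of_disjoint (h : Disjoint (reachSet G (D \ T) A) S) :
    reachSet G (D \ T) A ⊆ reachSet G (D \ S) A := fun _ ⟨a, ha, hv⟩ =>
  ⟨a, ha, hv.in_component.mono fun _ hx =>
    ⟨hx.right_mem.1, Set.disjoint_left.1 h ⟨a, ha, hx⟩⟩⟩

lemma Separates.symm (h : Separates G D A B T) : Separates G D B A T :=
  Set.disjoint_left.2 fun a ⟨_, hb, hba⟩ ha => Set.disjoint_left.1 h ⟨a, ha, hba.symm⟩ hb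

lemma Separates.disjoint_reachSet (h : Separates G D A B T) :
    Disjoint (reachSet G (D \ T) A) (reachSet G (D \ T) B) :=
  Set.disjoint_left.2 fun _ ⟨a, ha, hav⟩ ⟨_, hb, hbv⟩ =>
    Set.disjoint_left.1 h ⟨a, ha, hav.trans hbv.symm⟩ hb

lemma not_separates : ¬ Separates G D A B T ↔ ∃ a ∈ A, ∃ b ∈ B, ReachableIn G (D \ T) a b := by
  simp only [Separates, Set.not_disjoint_iff, reachSet]
  exact ⟨fun ⟨b, ⟨a, ha, h⟩, hb⟩ => ⟨a, ha, b, hb, h⟩, fun ⟨a, ha, b, hb, h⟩ => ⟨b, ⟨a, ha, h⟩, hb⟩⟩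

lemma exists_adj_leaving_reachSet (hG' : ¬ Separates G D A B S) (h : Separates G' D A B S) :
    ∃ x ∈ reachSet G' (D \ S) A, ∃ y ∈ D \ (S : Set V), G.Adj x y ∧ ¬ G'.Adj x y := by
  obtain ⟨a, ha, b, hb, hab⟩ := not_separates.1 hG'
  obtain ⟨x, ⟨-, hx⟩, y, ⟨hyD, hy⟩, hxy⟩ := hab.exists_boundary_adj
    (R := reachSet G' (D \ S) A) ⟨a, ha, .refl hab.left_mem⟩
    (fun hb' => Set.disjoint_left.1 h hb' hb)
  exact ⟨x, hx, y, hyD, hxy, fun hxy' => hy (mem_reachSet_of_adj hx hxy' hyD)⟩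

lemma eq_of_not_adj_deleteEdges {e : Sym2 V} (h : G.Adj u v)
    (h' : ¬ (G.deleteEdges {e}).Adj u v) : s(u, v) = e := by
  by_contra hne
  exact h' (deleteEdges_adj.2 ⟨h, hne⟩)

lemma Separates.exists_deleted_edge {e : Sym2 V}
    (hG' : ¬ Separates G D A B S) (h : Separates (G.deleteEdges {e}) D A B S) :
    ∃ x ∈ reachSet (G.deleteEdges {e}) (D \ S) A, ∃ y ∈ reachSet (G.deleteEdges {e}) (D \ S) B,
      G.Adj x y ∧ e = s(x, y) := by
  obtain ⟨x, hx, x', -, hxx', hx'⟩ := exists_adj_leaving_reachSet hG' h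
  obtain ⟨y, hy, y', -, hyy', hy'⟩ := exists_adj_leaving_reachSet (mt Separates.symm hG') h.symm
  have hedge := eq_of_not_adj_deleteEdges hxx' hx'
  obtain ⟨rfl, -⟩ | ⟨-, rfl⟩ :=
    Sym2.eq_iff.1 (hedge.trans (eq_of_not_adj_deleteEdges hyy' hy').symm)
  · exact (Set.disjoint_left.1 h.disjoint_reachSet hx hy).elim
  · exact ⟨x, hx, x', hy, hxx', hedge.symm⟩

lemma Separates.of_deleteEdges_insert [DecidableEq V]
    (hS : Separates (G.deleteEdges {s(x, y)}) D A B S)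
    (hy : y ∈ reachSet (G.deleteEdges {s(x, y)}) (D \ S) B)
    (hT : Separates (G.deleteEdges {s(x, y)}) D A (insert x S : Finset V) T) :
    Separates G D A B T := by
  by_contra hAB
  have hTx : x ∉ reachSet (G.deleteEdges {s(x, y)}) (D \ T) A := fun hx =>
    Set.disjoint_left.1 hT hx (by simp)
  have hTS := reachSet_subset_of_disjoint (hT.mono_right (by simp) : Disjoint _ (S : Set V))
  obtain ⟨c, hc, d, -, hcd, hcd'⟩ := exists_adj_leaving_reachSet hAB (hS.mono_left hTS)
  obtain ⟨rfl, -⟩ | ⟨rfl, -⟩ := Sym2.eq_iff.1 (eq_of_not_adj_deleteEdges hcd hcd')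
  · exact hTx hc
  · exact Set.disjoint_left.1 hS.disjoint_reachSet (hTS hc) hy

lemma IsConnectorFamily.comp {κ : Type*} {P : ι → Set V} (hP : IsConnectorFamily G D A B P)
    {f : κ → ι} (hf : Function.Injective f) : IsConnectorFamily G D A B (P ∘ f) where
  subset i := hP.subset (f i)
  connected i := hP.connected (f i)
  meets_left i := hP.meets_left (f i)
  meets_right i := hP.meets_right (f i)
  disjoint _ _ hij := hP.disjoint (hf.ne hij)

lemma IsConnectorFamily.swap {P : ι → Set V} (hP : IsConnectorFamily G D A B P) :
    IsConnectorFamily G D B A P :=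
  { hP with meets_left := hP.meets_right, meets_right := hP.meets_left }

lemma IsConnectorFamily.mono_graph {P : ι → Set V} (hP : IsConnectorFamily G D A B P)
    (hG : G ≤ G') : IsConnectorFamily G' D A B P :=
  { hP with connected := fun i => (hP.connected i).mono_graph hG }

/-- Cutting every connector at its first vertex in `S` leaves a fan. -/
lemma IsConnectorFamily.exists_isFan [Fintype ι] {P : ι → Set V}
    (hP : IsConnectorFamily G D A S P) (hS : S.card ≤ Fintype.card ι) :
    S.card = Fintype.card ι ∧ ∃ Q : V → Set V, IsFan G D A S Q := by
  classical
  have trim (i : ι) : ∃ s ∈ S, ∃ Q ⊆ P i, ConnectedOn G Q ∧ (Q ∩ A).Nonempty ∧ s ∈ Q ∧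
      ∀ x ∈ Q, x ≠ s → x ∈ reachSet G (D \ S) A := by
    obtain ⟨a, haP, haA⟩ := hP.meets_left i
    obtain ⟨t, htP, htS⟩ := hP.meets_right i
    obtain ⟨s, hs, Q, hQ, hQc, haQ, hsQ, hx⟩ :=
      ((hP.connected i).reachableIn haP htP).exists_connectedOn_first_hit htS
    exact ⟨s, hs, Q, hQ, hQc, ⟨a, haQ, haA⟩, hsQ, fun x hxQ hne =>
      ⟨a, haA, (hx x hxQ hne).mono (Set.sdiff_subset_sdiff_left (hP.subset i))⟩⟩
  choose s hsS Q hQP hQc hQA hsQ hQr using trim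
  have hQd {i j : ι} (hij : i ≠ j) : Disjoint (Q i) (Q j) :=
    (hP.disjoint hij).mono (hQP i) (hQP j)
  have hinj : Function.Injective s := fun i j hij => by
    by_contra hne
    exact Set.disjoint_left.1 (hQd hne) (hsQ i) (hij ▸ hsQ j)
  have himage : Finset.univ.image s = S :=
    Finset.eq_of_subset_of_card_le (Finset.image_subset_iff.2 fun i _ => hsS i)
      (by rwa [Finset.card_image_of_injective _ hinj])
  have hsurj {v : V} (hv : v ∈ S) : ∃ i, s i = v := by
    rw [← himage] at hv
    simpa using hv
  refine ⟨by rw [← himage, Finset.card_image_of_injective _ hinj, Finset.card_univ],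
    Function.extend s Q fun _ => ∅, ?_, ?_, ?_, ?_, ?_, ?_⟩
  case refine_6 =>
    intro v hv w hw hne
    obtain ⟨i, rfl⟩ := hsurj hv
    obtain ⟨j, rfl⟩ := hsurj hw
    simpa only [Function.onFun, hinj.extend_apply] using hQd (hinj.ne_iff.1 hne)
  all_goals
    intro v hv
    obtain ⟨i, rfl⟩ := hsurj hv
    simp only [hinj.extend_apply]
  exacts [(hQP i).trans (hP.subset i), hQc i, hQA i, hsQ i, hQr i]

lemma IsFan.mem_or_mem_reachSet [DecidableEq V] {P : V → Set V} {s : V}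
    (hP : IsFan G D A (insert x S) P) (hx : x ∈ reachSet G (D \ S) A)
    (hs : s ∈ insert x S) (hu : u ∈ P s) : (u = s ∧ u ∈ S) ∨ u ∈ reachSet G (D \ S) A := by
  obtain rfl | hne := eq_or_ne u s
  · obtain rfl | hsS := Finset.mem_insert.1 hs
    exacts [.inr hx, .inl ⟨rfl, hsS⟩]
  · exact .inr (reachSet_mono (Set.sdiff_subset_sdiff_right (by simp))
      (hP.mem_reachSet s hs u hu hne))

lemma IsFan.eq_of_mem_inter [DecidableEq V] {P Q : V → Set V} {s t : V}
    (hP : IsFan G D A (insert x S) P) (hQ : IsFan G D B (insert y S) Q)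
    (hS : Separates G D A B S) (hx : x ∈ reachSet G (D \ S) A) (hy : y ∈ reachSet G (D \ S) B)
    (hs : s ∈ insert x S) (ht : t ∈ insert y S) (hu : u ∈ P s ∩ Q t) : s = t ∧ s ∈ S := by
  obtain ⟨rfl, huS⟩ | huA := hP.mem_or_mem_reachSet hx hs hu.1 <;>
    obtain ⟨rfl, huS'⟩ | huB := hQ.mem_or_mem_reachSet hy ht hu.2
  · exact ⟨rfl, huS⟩
  · exact ((reachSet_subset huB).2 huS).elim
  · exact ((reachSet_subset huA).2 huS').elim
  · exact (Set.disjoint_left.1 hS.disjoint_reachSet huA huB).elim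

lemma IsFan.glue [DecidableEq V] {P Q : V → Set V} (hP : IsFan G' D A (insert x S) P)
    (hQ : IsFan G' D B (insert y S) Q) (hS : Separates G' D A B S) (hG : G' ≤ G)
    (hx : x ∈ reachSet G' (D \ S) A) (hy : y ∈ reachSet G' (D \ S) B) (hxy : G.Adj x y) :
    IsConnectorFamily G D A B
      fun o : Option S => P (o.elim x Subtype.val) ∪ Q (o.elim y Subtype.val) := by
  have hxS : x ∉ S := (reachSet_subset hx).2
  have hyS : y ∉ S := (reachSet_subset hy).2
  have hl (o : Option S) : o.elim x Subtype.val ∈ insert x S := by cases o <;> simp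
  have hr (o : Option S) : o.elim y Subtype.val ∈ insert y S := by cases o <;> simp
  have left_inj {o o' : Option S} (h : o ≠ o') :
      o.elim x Subtype.val ≠ o'.elim x Subtype.val := by
    rcases o with - | ⟨s, hs⟩ <;> rcases o' with - | ⟨t, ht⟩ <;> simp at h ⊢ <;> grind
  have right_inj {o o' : Option S} (h : o ≠ o') :
      o.elim y Subtype.val ≠ o'.elim y Subtype.val := by
    rcases o with - | ⟨s, hs⟩ <;> rcases o' with - | ⟨t, ht⟩ <;> simp at h ⊢ <;> grind
  have cross {o o' : Option S} (h : o ≠ o') :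
      Disjoint (P (o.elim x Subtype.val)) (Q (o'.elim y Subtype.val)) := by
    refine Set.disjoint_left.2 fun u hu hu' => ?_
    obtain ⟨hst, hsS⟩ := hP.eq_of_mem_inter hQ hS hx hy (hl o) (hr o') ⟨hu, hu'⟩
    rcases o with - | s <;> rcases o' with - | t
    exacts [h rfl, hxS hsS, hyS (hst.subst (motive := (· ∈ S)) hsS),
      h (congrArg some (Subtype.ext hst))]
  refine ⟨fun o => ?_, fun o => ?_, fun o => ?_, fun o => ?_, fun o o' h => ?_⟩
  · exact Set.union_subset (hP.subset _ (hl o)) (hQ.subset _ (hr o))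
  · have hPc := (hP.connected _ (hl o)).mono_graph hG
    have hQc := (hQ.connected _ (hr o)).mono_graph hG
    have hPs := hP.self_mem _ (hl o)
    have hQs := hQ.self_mem _ (hr o)
    rcases o with - | s
    exacts [hPc.union_of_setAdj hQc ⟨x, hPs, y, hQs, hxy⟩,
      hPc.union_of_inter_nonempty hQc ⟨s, hPs, hQs⟩]
  · exact (hP.meets _ (hl o)).mono (Set.inter_subset_inter_left _ Set.subset_union_left)
  · exact (hQ.meets _ (hr o)).mono (Set.inter_subset_inter_left _ Set.subset_union_right)
  · exact Set.disjoint_union_left.2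
      ⟨Set.disjoint_union_right.2 ⟨hP.disjoint (hl o) (hl o') (left_inj h), cross h⟩,
        Set.disjoint_union_right.2 ⟨(cross h.symm).symm, hQ.disjoint (hr o) (hr o') (right_inj h)⟩⟩

lemma exists_isConnectorFamily_bot [Finite V] {k : ℕ}
    (h : ∀ T : Finset V, Separates ⊥ D A B T → k ≤ T.card) :
    ∃ P : Fin k → Set V, IsConnectorFamily ⊥ D A B P := by
  have hfin : (A ∩ B ∩ D).Finite := Set.toFinite _
  have hsep : Separates ⊥ D A B hfin.toFinset := by
    refine Set.disjoint_left.2 fun b ⟨_, ha, p, hp⟩ hb => ?_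
    cases p with
    | nil => exact (hp b (by simp)).2 (by simpa using ⟨⟨ha, hb⟩, (hp b (by simp)).1⟩)
    | cons hadj _ => exact hadj
  obtain ⟨S, hS, hSk⟩ := Finset.exists_subset_card_eq (h _ hsep)
  let e := ((finCongr hSk).symm.trans S.equivFin.symm)
  have he (i : Fin k) : (e i : V) ∈ A ∩ B ∩ D := by simpa using hS (e i).2
  exact ⟨fun i => {(e i : V)}, fun i => by simpa using (he i).2, fun i => .singleton _,
    fun i => ⟨e i, rfl, (he i).1.1⟩, fun i => ⟨e i, rfl, (he i).1.2⟩,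
    fun i j hij => Set.disjoint_singleton.2 fun h => hij (e.injective (Subtype.ext h))⟩

theorem exists_isConnectorFamily [Finite V] {k : ℕ}
    (h : ∀ T : Finset V, Separates G D A B T → k ≤ T.card) :
    ∃ P : Fin k → Set V, IsConnectorFamily G D A B P := by
  classical
  induction G using (Finite.to_wellFoundedLT : WellFoundedLT (SimpleGraph V)).induction
    generalizing A B with
  | ind G ih =>
  by_cases hbot : G = ⊥
  · subst hbot
    exact exists_isConnectorFamily_bot h
  obtain ⟨⟨u, v⟩, he⟩ := edgeSet_nonempty.2 hbot
  have hlt : G.deleteEdges {s(u, v)} < G :=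
    (deleteEdges_le _).lt_of_ne fun hG => (deleteEdges_adj.1 (hG.symm ▸ he)).2 rfl
  by_cases hG' : ∀ T : Finset V, Separates (G.deleteEdges {s(u, v)}) D A B T → k ≤ T.card
  · obtain ⟨P, hP⟩ := ih _ hlt hG'
    exact ⟨P, hP.mono_graph hlt.le⟩
  push Not at hG'
  obtain ⟨S, hS, hSk⟩ := hG'
  obtain ⟨x, hx, y, hy, hxy, hedge⟩ := hS.exists_deleted_edge fun hS' => (h S hS').not_gt hSk
  rw [hedge] at hlt hS hx hy
  have fan {A B : Set V} {x y : V} (hS : Separates (G.deleteEdges {s(x, y)}) D A B S)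
      (hy : y ∈ reachSet (G.deleteEdges {s(x, y)}) (D \ S) B)
      (hlt : G.deleteEdges {s(x, y)} < G) (h : ∀ T, Separates G D A B T → k ≤ T.card) :
      (insert x S).card = k ∧ ∃ P, IsFan (G.deleteEdges {s(x, y)}) D A (insert x S) P := by
    obtain ⟨P, hP⟩ := ih _ hlt (A := A) (B := (insert x S : Finset V)) fun T hT =>
      h T (hS.of_deleteEdges_insert hy hT)
    simpa using hP.exists_isFan (by simpa using (Finset.card_insert_le x S).trans hSk)
  obtain ⟨hcard, P, hP⟩ := fan hS hy hlt h
  obtain ⟨-, Q, hQ⟩ := fan (x := y) (y := x) (Sym2.eq_swap ▸ hS.symm) (Sym2.eq_swap ▸ hx)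
    (Sym2.eq_swap ▸ hlt) fun T hT => h T hT.symm
  rw [Sym2.eq_swap] at hQ
  have e : Fintype.card (Option S) = k := by
    rw [← hcard, Finset.card_insert_of_notMem (reachSet_subset hx).2, Fintype.card_option,
      Fintype.card_coe]
  exact ⟨_, (hP.glue hQ hS hlt.le hx hy hxy).comp (Fintype.equivFinOfCardEq e).symm.injective⟩

theorem exists_separates_and_isConnectorFamily [Finite V] (G : SimpleGraph V) (D A B : Set V) :
    ∃ T : Finset V, Separates G D A B T ∧
      ∃ P : Fin T.card → Set V, IsConnectorFamily G D A B P := by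
  classical
  cases nonempty_fintype V
  have hne : {T : Finset V | Separates G D A B T}.Nonempty :=
    ⟨Finset.univ, Set.disjoint_left.2 fun v hv => ((reachSet_subset hv).2 (by simp)).elim⟩
  obtain ⟨T, hT, hmin⟩ := Set.exists_min_image _ Finset.card (Set.toFinite _) hne
  exact ⟨T, hT, exists_isConnectorFamily hmin⟩

end Menger

/-! ### Binary trees in graphs of large path-width -/

section Pathwidth

variable {V : Type*} {G : SimpleGraph V} {X Y Z : Finset V} {v y : V} {n m i : ℕ}

open Classical in
/-- The vertices of `X` that have a neighbour outside `X`. -/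
noncomputable def boundary (G : SimpleGraph V) (X : Finset V) : Finset V :=
  {v ∈ X | ∃ u, u ∉ X ∧ G.Adj v u}

lemma mem_boundary : v ∈ boundary G X ↔ v ∈ X ∧ ∃ u, u ∉ X ∧ G.Adj v u := by
  simp [boundary]

lemma boundary_subset : boundary G X ⊆ X := fun _ hv => (mem_boundary.1 hv).1

lemma boundary_insert_subset [DecidableEq V] (y : V) (X : Finset V) :
    boundary G (insert y X) ⊆ insert y (boundary G X) := by
  intro v hv
  obtain ⟨hv, u, hu, hvu⟩ := mem_boundary.1 hv
  obtain rfl | hvX := Finset.mem_insert.1 hv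
  · exact Finset.mem_insert_self _ _
  · exact Finset.mem_insert_of_mem
      (mem_boundary.2 ⟨hvX, u, fun huX => hu (Finset.mem_insert_of_mem huX), hvu⟩)

/-- The bags `W 0, …, W m` form a path-decomposition of the subgraph induced on `X`, have at most
`n` vertices each, and the last one contains the boundary of `X`, so that the decomposition can be
continued outside `X`. -/
structure IsPartialPathDecomp (G : SimpleGraph V) (n : ℕ) (X : Finset V) (m : ℕ)
    (W : ℕ → Finset V) : Prop where
  bag_subset : ∀ i ≤ m, W i ⊆ X
  card_bag_le : ∀ i ≤ m, (W i).card ≤ n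
  exists_mem_bag : ∀ v ∈ X, ∃ i ≤ m, v ∈ W i
  exists_adj_mem_bag : ∀ u ∈ X, ∀ v ∈ X, G.Adj u v → ∃ i ≤ m, u ∈ W i ∧ v ∈ W i
  mem_bag_of_le_of_le : ∀ i j l, i ≤ j → j ≤ l → l ≤ m → ∀ v ∈ W i, v ∈ W l → v ∈ W j
  boundary_subset_last : boundary G X ⊆ W m

/-- `X` has a partial path-decomposition with bags of at most `n` vertices. -/
def PathDecomposable (G : SimpleGraph V) (n : ℕ) (X : Finset V) : Prop :=
  ∃ m W, IsPartialPathDecomp G n X m W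

lemma PathDecomposable.empty (G : SimpleGraph V) (n : ℕ) : PathDecomposable G n ∅ :=
  ⟨0, fun _ => ∅, by constructor <;> simp [boundary]⟩

lemma PathDecomposable.pathwidth_le [Fintype V] (h : PathDecomposable G (n + 1) Finset.univ) :
    pathwidth G ≤ n := by
  obtain ⟨m, W, hW⟩ := h
  refine Nat.sInf_le ⟨m + 1, fun i => W i, ⟨fun v => ?_, fun u v huv => ?_, fun i j l hij hjl v =>
    hW.mem_bag_of_le_of_le i j l hij hjl (by lia) v⟩, fun i => hW.card_bag_le i (by lia)⟩
  · obtain ⟨i, hi, hv⟩ := hW.exists_mem_bag v (Finset.mem_univ v)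
    exact ⟨⟨i, by lia⟩, hv⟩
  · obtain ⟨i, hi, h⟩ := hW.exists_adj_mem_bag u (Finset.mem_univ u) v (Finset.mem_univ v) huv
    exact ⟨⟨i, by lia⟩, h⟩

lemma PathDecomposable.insert_vertex [DecidableEq V] (h : PathDecomposable G n X)
    (hX : (boundary G X).card < n) (hy : y ∉ X) : PathDecomposable G n (insert y X) := by
  obtain ⟨m, W, hW⟩ := h
  let W' (i : ℕ) : Finset V := if i ≤ m then W i else insert y (boundary G X)
  have hW'_le {i : ℕ} (hi : i ≤ m) : W' i = W i := if_pos hi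
  have hW'_gt {i : ℕ} (hi : m < i) : W' i = insert y (boundary G X) := if_neg hi.not_ge
  have adj_mem_last {v : V} (hv : v ∈ X) (hvy : G.Adj v y) : v ∈ W' (m + 1) := by
    rw [hW'_gt m.lt_succ_self]
    exact Finset.mem_insert_of_mem (mem_boundary.2 ⟨hv, y, hy, hvy⟩)
  have y_mem_last : y ∈ W' (m + 1) := by simp [hW'_gt]
  refine ⟨m + 1, W', fun i _ => ?_, fun i _ => ?_, fun v hv => ?_, fun u hu v hv huv => ?_,
    fun i j l hij hjl _ v hvi hvl => ?_, ?_⟩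
  · obtain hi | hi := le_or_gt i m
    · exact hW'_le hi ▸ (hW.bag_subset i hi).trans (Finset.subset_insert _ _)
    · exact hW'_gt hi ▸ Finset.insert_subset_insert _ boundary_subset
  · obtain hi | hi := le_or_gt i m
    · exact hW'_le hi ▸ hW.card_bag_le i hi
    · exact hW'_gt hi ▸ (Finset.card_insert_le _ _).trans hX
  · obtain rfl | hv := Finset.mem_insert.1 hv
    · exact ⟨m + 1, le_rfl, y_mem_last⟩
    · obtain ⟨i, hi, hvi⟩ := hW.exists_mem_bag v hv
      exact ⟨i, by lia, by rwa [hW'_le hi]⟩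
  · obtain huy | huX := Finset.mem_insert.1 hu <;> obtain hvy | hvX := Finset.mem_insert.1 hv
    · exact (huv.ne (huy.trans hvy.symm)).elim
    · exact ⟨m + 1, le_rfl, huy ▸ y_mem_last, adj_mem_last hvX (huy ▸ huv.symm)⟩
    · exact ⟨m + 1, le_rfl, adj_mem_last huX (hvy ▸ huv), hvy ▸ y_mem_last⟩
    · obtain ⟨i, hi, h⟩ := hW.exists_adj_mem_bag u huX v hvX huv
      exact ⟨i, by lia, by rwa [hW'_le hi]⟩
  · obtain hj | hj := le_or_gt j m
    · rw [hW'_le (hij.trans hj)] at hvi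
      rw [hW'_le hj]
      obtain hl | hl := le_or_gt l m
      · exact hW.mem_bag_of_le_of_le i j l hij hjl hl v hvi (hW'_le hl ▸ hvl)
      · rw [hW'_gt hl] at hvl
        have hvX : v ≠ y := fun hvy => hy (hvy ▸ hW.bag_subset i (hij.trans hj) hvi)
        exact hW.mem_bag_of_le_of_le i j m hij hj le_rfl v hvi
          (hW.boundary_subset_last (Finset.mem_of_mem_insert_of_ne hvl hvX))
    · rwa [hW'_gt hj, ← hW'_gt (hj.trans_le hjl)]
  · rw [hW'_gt m.lt_succ_self]
    exact boundary_insert_subset y X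

lemma IsPartialPathDecomp.inter_bag_nonempty {W : ℕ → Finset V} {P : Set V} {j l : ℕ}
    (hW : IsPartialPathDecomp G n X m W) (hP : ConnectedOn G P) (hPX : P ⊆ X) (hij : i ≤ j)
    (hjl : j ≤ l) (hl : l ≤ m) (hi : (P ∩ W i).Nonempty) (hl' : (P ∩ W l).Nonempty) :
    (P ∩ W j).Nonempty := by
  obtain ⟨a, haP, hai⟩ := hi
  obtain ⟨b, hbP, hbl⟩ := hl'
  by_contra hj
  have notMem {z : V} (hz : z ∈ P) : z ∉ W j := fun hzj => hj ⟨z, hz, hzj⟩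
  obtain ⟨z, ⟨hz, i', hi', hzi'⟩, z', ⟨hz', hz'j⟩, hzz'⟩ :=
    (hP.reachableIn haP hbP).exists_boundary_adj (R := {z | ∃ i' ≤ j, z ∈ W i'}) ⟨i, hij, hai⟩
      fun ⟨i', hi', h⟩ => notMem hbP (hW.mem_bag_of_le_of_le i' j l hi' hjl hl b h hbl)
  obtain ⟨t, ht, hzt, hz't⟩ := hW.exists_adj_mem_bag z (hPX hz) z' (hPX hz') hzz'
  obtain htj | htj := le_total t j
  · exact hz'j ⟨t, htj, hz't⟩
  · exact notMem hz (hW.mem_bag_of_le_of_le i' j t hi' htj ht z hzi' hzt)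

lemma PathDecomposable.of_pairwiseDisjoint {P : V → Set V} (h : PathDecomposable G n Y)
    (hP : ∀ v ∈ Z, ConnectedOn G (P v)) (hPY : ∀ v ∈ Z, P v ⊆ Y) (hself : ∀ v ∈ Z, v ∈ P v)
    (hdisj : (Z : Set V).PairwiseDisjoint P)
    (hbd : ∀ v ∈ boundary G Z, (P v ∩ boundary G Y).Nonempty) : PathDecomposable G n Z := by
  classical
  obtain ⟨m, W, hW⟩ := h
  have mem_bag {v : V} (hv : v ∈ Z) {i : ℕ} (hi : v ∈ W i) :
      v ∈ ({v ∈ Z | (P v ∩ W i).Nonempty} : Finset V) :=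
    Finset.mem_filter.2 ⟨hv, v, hself v hv, hi⟩
  have hZY {v : V} (hv : v ∈ Z) : v ∈ Y := hPY v hv (hself v hv)
  refine ⟨m, fun i => {v ∈ Z | (P v ∩ W i).Nonempty}, fun i _ => Finset.filter_subset _ _,
    fun i hi => ?_, fun v hv => ?_, fun u hu v hv huv => ?_, fun i j l hij hjl hl v hvi hvl => ?_,
    fun v hv => ?_⟩
  · have hrep (v : ({v ∈ Z | (P v ∩ W i).Nonempty} : Finset V)) : ∃ x ∈ W i, x ∈ P v :=
      let ⟨x, hxP, hxW⟩ := (Finset.mem_filter.1 v.2).2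
      ⟨x, hxW, hxP⟩
    choose x hxW hxP using hrep
    refine (Finset.card_le_card_of_injOn (s := Finset.univ) x (fun v _ => hxW v)
      fun v _ w _ hvw => ?_).trans (hW.card_bag_le i hi) |>.trans' (by simp)
    by_contra hne
    exact Set.disjoint_left.1 (hdisj (Finset.mem_filter.1 v.2).1 (Finset.mem_filter.1 w.2).1
      (Subtype.coe_injective.ne hne)) (hxP v) (hvw ▸ hxP w)
  · obtain ⟨i, hi, hvi⟩ := hW.exists_mem_bag v (hZY hv)
    exact ⟨i, hi, mem_bag hv hvi⟩
  · obtain ⟨i, hi, hui, hvi⟩ := hW.exists_adj_mem_bag u (hZY hu) v (hZY hv) huv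
    exact ⟨i, hi, mem_bag hu hui, mem_bag hv hvi⟩
  · obtain ⟨hv, hvi⟩ := Finset.mem_filter.1 hvi
    exact Finset.mem_filter.2 ⟨hv, hW.inter_bag_nonempty (hP v hv) (hPY v hv) hij hjl hl hvi
      (Finset.mem_filter.1 hvl).2⟩
  · exact Finset.mem_filter.2 ⟨boundary_subset hv,
      (hbd v hv).mono (Set.inter_subset_inter_right _ hW.boundary_subset_last)⟩

lemma PathDecomposable.of_isFan {D : Set V} {T : Finset V} {P : V → Set V}
    (h : PathDecomposable G n Y) (hZY : Z ⊆ Y) (hDY : D ⊆ Y) (hZT : boundary G Z ⊆ T)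
    (hP : IsFan G D (boundary G Y) T P) (hPZ : ∀ s ∈ T, ∀ x ∈ P s, x ∈ Z → x = s) :
    PathDecomposable G n Z := by
  classical
  refine h.of_pairwiseDisjoint (P := fun v => if v ∈ T then P v else {v}) (fun v _ => ?_)
    (fun v hv => ?_) (fun v _ => ?_) (fun v hv w hw hvw => ?_) fun v hv => ?_
  · split_ifs with hvT
    exacts [hP.connected v hvT, .singleton v]
  · split_ifs with hvT
    exacts [(hP.subset v hvT).trans hDY, by simpa using hZY hv]
  · split_ifs with hvT
    exacts [hP.self_mem v hvT, rfl]
  · simp only [Function.onFun]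
    split_ifs with hvT hwT hwT
    · exact hP.disjoint hvT hwT hvw
    · exact Set.disjoint_singleton_right.2 fun hwP => hvw (hPZ v hvT w hwP hw).symm
    · exact Set.disjoint_singleton_left.2 fun hvP => hvw (hPZ w hwT v hvP hv)
    · simpa using hvw
  · rw [if_pos (hZT hv)]
    exact hP.meets v (hZT hv)

lemma IsConnectorFamily.to_separator {ι : Type*} {D A B : Set V} {T : Finset V} {P : ι → Set V}
    (hP : IsConnectorFamily G D A B P) (hT : Separates G D A B T) :
    IsConnectorFamily G D B T P where
  subset := hP.subset
  connected := hP.connected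
  meets_left := hP.meets_right
  meets_right i := by
    by_contra hne
    obtain ⟨a, haP, haA⟩ := hP.meets_left i
    obtain ⟨b, hbP, hbB⟩ := hP.meets_right i
    exact Set.disjoint_left.1 hT ⟨a, haA, ((hP.connected i).reachableIn haP hbP).mono
      fun z hz => ⟨hP.subset i hz, fun hzT => hne ⟨z, hz, hzT⟩⟩⟩ hbB
  disjoint := hP.disjoint

lemma boundary_filter_subset_of_separates {T : Finset V}
    [DecidablePred fun v => v ∈ X ∨ v ∈ T ∨
      v ∈ reachSet G ((↑Y \ ↑X ∪ ↑(boundary G X)) \ ↑T) (boundary G X)] (hXY : X ⊆ Y)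
    (hT : Separates G (↑Y \ ↑X ∪ ↑(boundary G X)) (boundary G X) (boundary G Y) T) :
    boundary G {v ∈ Y | v ∈ X ∨ v ∈ T ∨
      v ∈ reachSet G ((↑Y \ ↑X ∪ ↑(boundary G X)) \ ↑T) (boundary G X)} ⊆ T := by
  intro v hv
  by_contra hvT
  obtain ⟨hvZ, u, hu, hvu⟩ := mem_boundary.1 hv
  obtain ⟨hvY, hvZ⟩ := Finset.mem_filter.1 hvZ
  have huX : u ∉ X := fun huX => hu (Finset.mem_filter.2 ⟨hXY huX, .inl huX⟩)
  have hvR : v ∈ reachSet G ((↑Y \ ↑X ∪ ↑(boundary G X)) \ ↑T) (boundary G X) := by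
    obtain hvX | hvT' | hvR := hvZ
    · have hv : v ∈ boundary G X := mem_boundary.2 ⟨hvX, u, huX, hvu⟩
      exact ⟨v, hv, .refl ⟨.inr hv, hvT⟩⟩
    exacts [(hvT hvT').elim, hvR]
  have huY : u ∈ Y := by
    by_contra huY
    exact Set.disjoint_left.1 hT hvR (mem_boundary.2 ⟨hvY, u, huY, hvu⟩)
  by_cases huT : u ∈ T
  · exact hu (Finset.mem_filter.2 ⟨huY, .inr (.inl huT)⟩)
  · exact hu (Finset.mem_filter.2 ⟨huY, .inr (.inr
      (mem_reachSet_of_adj hvR hvu ⟨.inl ⟨huY, huX⟩, huT⟩))⟩)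

/-- If a smaller separator existed, its near side would be a decomposable set with smaller
boundary; so Menger's theorem applies. -/
lemma PathDecomposable.exists_isFan_boundary [Finite V] (hY : PathDecomposable G n Y) (hXY : X ⊆ Y)
    (hmin : ∀ Z, X ⊆ Z → PathDecomposable G n Z → (boundary G X).card ≤ (boundary G Z).card) :
    ∃ P, IsFan G (↑Y \ ↑X ∪ ↑(boundary G X)) (boundary G Y) (boundary G X) P := by
  classical
  obtain ⟨T, hT, P, hP⟩ := exists_separates_and_isConnectorFamily G
    (↑Y \ ↑X ∪ ↑(boundary G X)) (boundary G X) (boundary G Y)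
  obtain ⟨-, Q, hQ⟩ := (hP.to_separator hT).exists_isFan (by simp)
  set Z : Finset V := {v ∈ Y | v ∈ X ∨ v ∈ T ∨
    v ∈ reachSet G ((↑Y \ ↑X ∪ ↑(boundary G X)) \ ↑T) (boundary G X)}
  have hZT : boundary G Z ⊆ T := boundary_filter_subset_of_separates hXY hT
  have hQZ {s : V} (hs : s ∈ T) {x : V} (hx : x ∈ Q s) (hxZ : x ∈ Z) : x = s := by
    by_contra hne
    have hxR := hQ.mem_reachSet s hs x hx hne
    obtain ⟨hxD, hxT⟩ := reachSet_subset hxR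
    obtain hxX | hxT' | hxR' := (Finset.mem_filter.1 hxZ).2
    · exact Set.disjoint_left.1 hT.symm hxR (hxD.resolve_left fun h => h.2 hxX)
    · exact hxT hxT'
    · exact Set.disjoint_left.1 hT.disjoint_reachSet hxR' hxR
  have hZ : PathDecomposable G n Z := hY.of_isFan (Finset.filter_subset _ _)
    (Set.union_subset Set.sdiff_subset (boundary_subset.trans hXY)) hZT hQ fun _ hs _ => hQZ hs
  have hcard : (boundary G X).card ≤ T.card :=
    (hmin Z (fun v hv => Finset.mem_filter.2 ⟨hXY hv, .inl hv⟩) hZ).trans (Finset.card_le_card hZT)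
  exact (hP.swap.exists_isFan (by simpa using hcard)).2

/-- Disjoint connected subsets `U 0, …, U (i - 1)` of `X`, each meeting the boundary of `X`, with
`U j` adjacent to `U (parent j)` for `0 < j`. -/
structure IsForestModel (G : SimpleGraph V) (parent : ℕ → ℕ) (i : ℕ) (X : Finset V)
    (U : ℕ → Set V) : Prop where
  connected : ∀ j < i, ConnectedOn G (U j)
  subset : ∀ j < i, U j ⊆ X
  meets_boundary : ∀ j < i, (U j ∩ boundary G X).Nonempty
  disjoint : (Set.Iio i).PairwiseDisjoint U
  setAdj_parent : ∀ j < i, 0 < j → SetAdj G (U j) (U (parent j))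

variable {parent : ℕ → ℕ} {U : ℕ → Set V}

lemma IsForestModel.insert_vertex [DecidableEq V] (hU : IsForestModel G parent i X U) (hy : y ∉ X)
    (hbd : boundary G (insert y X) = insert y (boundary G X))
    (hparent : ∀ j, 0 < j → parent j < j)
    (hadj : 0 < i → ∃ x ∈ U (parent i), G.Adj x y) :
    IsForestModel G parent (i + 1) (insert y X) (Function.update U i {y}) := by
  have update_of_lt {j : ℕ} (hj : j < i) : Function.update U i {y} j = U j :=
    Function.update_of_ne hj.ne _ _
  have forall_lt_succ {p : ℕ → Prop} (hlt : ∀ j < i, p j) (hi : p i) : ∀ j < i + 1, p j :=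
    fun j hj => (Nat.lt_succ_iff_lt_or_eq.1 hj).elim (hlt j) fun h => h ▸ hi
  have disjoint_new {j : ℕ} (hj : j < i) : Disjoint (U j) {y} :=
    Set.disjoint_singleton_right.2 fun hyU => hy (hU.subset j hj hyU)
  refine ⟨forall_lt_succ (fun j hj => ?_) ?_, forall_lt_succ (fun j hj => ?_) ?_,
    forall_lt_succ (fun j hj => ?_) ?_, forall_lt_succ (fun j hj => ?_) ?_,
    forall_lt_succ (fun j hj hj0 => ?_) fun hi => ?_⟩
  · exact update_of_lt hj ▸ hU.connected j hj
  · simpa using ConnectedOn.singleton y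
  · exact update_of_lt hj ▸ (hU.subset j hj).trans (by simp)
  · simp
  · rw [update_of_lt hj, hbd]
    exact (hU.meets_boundary j hj).mono (Set.inter_subset_inter_right _ (by simp))
  · exact ⟨y, by simp [hbd]⟩
  · refine forall_lt_succ (fun l hl hjl => ?_) fun _ => ?_
    · simpa only [Function.onFun, update_of_lt hj, update_of_lt hl] using hU.disjoint hj hl hjl
    · simpa only [Function.onFun, update_of_lt hj, Function.update_self] using disjoint_new hj
  · refine forall_lt_succ (fun l hl _ => ?_) fun h => (h rfl).elim
    simpa only [Function.onFun, update_of_lt hl, Function.update_self] using (disjoint_new hl).symm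
  · rw [update_of_lt hj, update_of_lt ((hparent j hj0).trans hj)]
    exact hU.setAdj_parent j hj hj0
  · obtain ⟨x, hx, hxy⟩ := hadj hi
    rw [Function.update_self, update_of_lt (hparent i hi)]
    exact ⟨y, rfl, x, hx, hxy.symm⟩

lemma IsForestModel.extend {P : V → Set V} (hU : IsForestModel G parent i X U) (hXY : X ⊆ Y)
    (hP : IsFan G (↑Y \ ↑X ∪ ↑(boundary G X)) (boundary G Y) (boundary G X) P) :
    IsForestModel G parent i Y fun j => U j ∪ ⋃ s ∈ U j ∩ boundary G X, P s := by
  have subset_extend (j : ℕ) : U j ⊆ U j ∪ ⋃ s ∈ U j ∩ boundary G X, P s := Set.subset_union_left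
  have fan_subset {j : ℕ} {s : V} (hs : s ∈ U j ∩ boundary G X) :
      P s ⊆ U j ∪ ⋃ s ∈ U j ∩ boundary G X, P s :=
    fun _ hv => .inr (Set.mem_biUnion hs hv)
  have mem_of_mem_extend {j : ℕ} {v : V} (hv : v ∈ U j ∪ ⋃ s ∈ U j ∩ boundary G X, P s)
      (hvX : v ∈ X) : v ∈ U j := by
    obtain hv | hv := hv
    · exact hv
    obtain ⟨s, ⟨hsU, hsX⟩, hvP⟩ := Set.mem_iUnion₂.1 hv
    have hvbd : v ∈ boundary G X := (hP.subset s hsX hvP).resolve_left fun h => h.2 hvX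
    have hvs : v = s := by
      by_contra hne
      exact Set.disjoint_left.1 (hP.disjoint hvbd hsX hne) (hP.self_mem v hvbd) hvP
    exact hvs ▸ hsU
  refine ⟨fun j hj => ?_, fun j hj => ?_, fun j hj => ?_, fun j hj l hl hjl => ?_,
    fun j hj hj0 => (hU.setAdj_parent j hj hj0).mono (subset_extend _) (subset_extend _)⟩
  · obtain ⟨u, hu⟩ := (hU.connected j hj).nonempty
    refine .of_forall_reachableIn (subset_extend j hu) fun v hv => ?_
    obtain hv | hv := hv
    · exact ((hU.connected j hj).reachableIn hu hv).mono (subset_extend j)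
    · obtain ⟨s, hs, hvP⟩ := Set.mem_iUnion₂.1 hv
      exact (((hU.connected j hj).reachableIn hu hs.1).mono (subset_extend j)).trans
        (((hP.connected s hs.2).reachableIn (hP.self_mem s hs.2) hvP).mono (fan_subset hs))
  · refine Set.union_subset ((hU.subset j hj).trans hXY) (Set.iUnion₂_subset fun s hs => ?_)
    exact (hP.subset s hs.2).trans (Set.union_subset Set.sdiff_subset (boundary_subset.trans hXY))
  · obtain ⟨s, hs⟩ := hU.meets_boundary j hj
    exact (hP.meets s hs.2).mono (Set.inter_subset_inter_left _ (fan_subset hs))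
  · refine Set.disjoint_left.2 fun v hvj hvl => ?_
    by_cases hvX : v ∈ X
    · exact Set.disjoint_left.1 (hU.disjoint hj hl hjl) (mem_of_mem_extend hvj hvX)
        (mem_of_mem_extend hvl hvX)
    obtain ⟨s, hs, hvs⟩ := Set.mem_iUnion₂.1 (hvj.resolve_left fun h => hvX (hU.subset j hj h))
    obtain ⟨t, ht, hvt⟩ := Set.mem_iUnion₂.1 (hvl.resolve_left fun h => hvX (hU.subset l hl h))
    have hst : s ≠ t := fun hst => Set.disjoint_left.1 (hU.disjoint hj hl hjl) hs.1 (hst ▸ ht.1)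
    exact Set.disjoint_left.1 (hP.disjoint hs.2 ht.2 hst) hvs hvt

lemma PathDecomposable.exists_maximal [Finite V] (h : PathDecomposable G n X)
    (hX : (boundary G X).card ≤ i) :
    ∃ Y, X ⊆ Y ∧ Maximal (fun Z => PathDecomposable G n Z ∧ (boundary G Z).card ≤ i) Y :=
  Finite.exists_le_maximal (p := fun Z => PathDecomposable G n Z ∧ (boundary G Z).card ≤ i) ⟨h, hX⟩

lemma exists_notMem_adj_parent [Fintype V] (hpw : n ≤ pathwidth G) (hi : i < n)
    (hparent : ∀ j, 0 < j → parent j < j) (hX : PathDecomposable G n X)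
    (hU : IsForestModel G parent i X U) :
    ∃ y, y ∉ X ∧ (0 < i → ∃ x ∈ U (parent i), G.Adj x y) := by
  obtain rfl | hi0 := Nat.eq_zero_or_pos i
  · obtain ⟨n, rfl⟩ := Nat.exists_eq_succ_of_ne_zero hi.ne'
    by_contra! hall
    have : X = Finset.univ := Finset.eq_univ_of_forall fun y => by
      by_contra hy
      exact absurd (hall y hy).1 (by lia)
    exact absurd ((this ▸ hX).pathwidth_le) (by lia)
  · obtain ⟨x, hxU, hx⟩ := hU.meets_boundary _ (hparent i hi0)
    obtain ⟨-, y, hy, hxy⟩ := mem_boundary.1 hx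
    exact ⟨y, hy, fun _ => ⟨x, hxU, hxy⟩⟩

lemma IsForestModel.exists_succ [Fintype V] (hpw : n ≤ pathwidth G) (hi : i < n)
    (hparent : ∀ j, 0 < j → parent j < j) (hU : IsForestModel G parent i X U)
    (hX : Maximal (fun Z => PathDecomposable G n Z ∧ (boundary G Z).card ≤ i) X) :
    ∃ Y U', IsForestModel G parent (i + 1) Y U' ∧
      Maximal (fun Z => PathDecomposable G n Z ∧ (boundary G Z).card ≤ i + 1) Y := by
  classical
  obtain ⟨⟨hXd, hXi⟩, -⟩ := id hX
  obtain ⟨y, hy, hadj⟩ := exists_notMem_adj_parent hpw hi hparent hXd hU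
  have hcard_insert : (insert y (boundary G X)).card ≤ i + 1 :=
    (Finset.card_insert_le _ _).trans (by lia)
  have hlarge (Z : Finset V) (hZ : insert y X ⊆ Z) (hZd : PathDecomposable G n Z) :
      i + 1 ≤ (boundary G Z).card := by
    by_contra! hlt
    exact hy (hX.le_of_ge ⟨hZd, by lia⟩ ((Finset.subset_insert y X).trans hZ)
      (hZ (Finset.mem_insert_self y X)))
  have hyd : PathDecomposable G n (insert y X) := hXd.insert_vertex (by lia) hy
  have hbd : boundary G (insert y X) = insert y (boundary G X) :=
    Finset.eq_of_subset_of_card_le (boundary_insert_subset y X)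
      (hcard_insert.trans (hlarge _ subset_rfl hyd))
  obtain ⟨Y, hyY, hY⟩ := hyd.exists_maximal (hbd ▸ hcard_insert)
  obtain ⟨P, hP⟩ := hY.prop.1.exists_isFan_boundary hyY fun Z hZ hZd =>
    (hbd ▸ hcard_insert).trans (hlarge Z hZ hZd)
  exact ⟨Y, _, (hU.insert_vertex hy hbd hparent hadj).extend hyY hP, hY⟩

/-- The forest has vertices `0, …, n - 1`, numbered so that parents precede their children. -/
theorem exists_forest_of_le_pathwidth [Fintype V] (hpw : n ≤ pathwidth G)
    (hparent : ∀ j, 0 < j → parent j < j) : ∃ U : ℕ → Set V, (∀ j < n, ConnectedOn G (U j)) ∧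
      (Set.Iio n).PairwiseDisjoint U ∧ ∀ j < n, 0 < j → SetAdj G (U j) (U (parent j)) := by
  have exists_model {i : ℕ} (hi : i ≤ n) : ∃ X U, IsForestModel G parent i X U ∧
      Maximal (fun Z => PathDecomposable G n Z ∧ (boundary G Z).card ≤ i) X := by
    induction i with
    | zero =>
      obtain ⟨X, -, hX⟩ := (PathDecomposable.empty G n).exists_maximal (i := 0) (by simp [boundary])
      exact ⟨X, fun _ => ∅, by constructor <;> simp, hX⟩
    | succ i ih =>
      obtain ⟨X, U, hU, hX⟩ := ih (by lia)
      exact hU.exists_succ hpw (by lia) hparent hX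
  obtain ⟨X, U, hU, -⟩ := exists_model le_rfl
  exact ⟨U, hU.connected, hU.disjoint, hU.setAdj_parent⟩

end Pathwidth

/-! ### Binary trees of connected sets -/

section BinaryTree

variable {V : Type*} {G : SimpleGraph V} {L L' T R R' A B C X Y Z : Set V} {n k : ℕ} {u : V}

/-- `T` is the disjoint union of connected sets arranged as a complete binary tree of height `n`
with root `R`, adjacent sets being joined by an edge of `G`, and every leaf meets `L`. -/
inductive IsBinaryTree (G : SimpleGraph V) (L : Set V) : ℕ → Set V → Set V → Prop
  | leaf {R : Set V} (connected : ConnectedOn G R) (meets : (R ∩ L).Nonempty) :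
      IsBinaryTree G L 0 R R
  | node {n : ℕ} {R : Set V} {T S : Bool → Set V} (connected : ConnectedOn G R)
      (subtree : ∀ b, IsBinaryTree G L n (T b) (S b)) (disjoint_root : ∀ b, Disjoint R (T b))
      (disjoint : ∀ b, Disjoint (T b) (T !b)) (setAdj : ∀ b, SetAdj G R (S b)) :
      IsBinaryTree G L (n + 1) (R ∪ ⋃ b, T b) R

/-- `R` lies in the connected set `X \ Y`, which is joined to `R'` by an edge. This is how a proper
subtree with union `Y` and root `R'` sits in a binary tree with union `X` and root `R`. -/
structure IsProperSubtree (G : SimpleGraph V) (X R Y R' : Set V) : Prop where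
  subset : Y ⊆ X
  sdiff_connected : ConnectedOn G (X \ Y)
  root_subset : R ⊆ X \ Y
  setAdj : SetAdj G (X \ Y) R'

/-- The reflexive closure of `IsProperSubtree`. -/
def IsSubtree (G : SimpleGraph V) (X R Y R' : Set V) : Prop :=
  (X = Y ∧ R = R') ∨ IsProperSubtree G X R Y R'

/-- The vertices with a neighbour in `A`, some of which may lie in `A`. -/
def neighborhood (G : SimpleGraph V) (A : Set V) : Set V := {v | ∃ u ∈ A, G.Adj u v}

lemma IsSubtree.subset (h : IsSubtree G X R Y R') : Y ⊆ X :=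
  h.elim (fun h => h.1.ge) IsProperSubtree.subset

lemma IsProperSubtree.trans_isSubtree {R'' : Set V} (h : IsProperSubtree G X R Y R')
    (h' : IsSubtree G Y R' Z R'') : IsProperSubtree G X R Z R'' := by
  obtain ⟨rfl, rfl⟩ | h' := h'
  · exact h
  have hunion := Set.sdiff_union_sdiff_cancel h.subset h'.subset
  exact ⟨h'.subset.trans h.subset,
    hunion ▸ h.sdiff_connected.union_of_setAdj h'.sdiff_connected
      (h.setAdj.mono subset_rfl h'.root_subset),
    h.root_subset.trans (Set.sdiff_subset_sdiff_right h'.subset),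
    h'.setAdj.mono (Set.sdiff_subset_sdiff_left h.subset) subset_rfl⟩

namespace IsBinaryTree

lemma root_subset (h : IsBinaryTree G L n T R) : R ⊆ T := by
  cases h
  exacts [subset_rfl, Set.subset_union_left]

lemma connected (h : IsBinaryTree G L n T R) : ConnectedOn G T := by
  induction h with
  | leaf hR => exact hR
  | node hR h _ _ hadj ih =>
    exact hR.union_iUnion_of_setAdj ih fun b => (hadj b).mono subset_rfl (h b).root_subset

lemma mono_leaves (h : IsBinaryTree G L n T R) (hL : L ∩ T ⊆ L') : IsBinaryTree G L' n T R := by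
  induction h with
  | leaf hR hRL =>
    obtain ⟨x, hxR, hxL⟩ := hRL
    exact .leaf hR ⟨x, hxR, hL ⟨hxL, hxR⟩⟩
  | node hR _ hRT hT hadj ih =>
    exact .node hR (fun b => ih b fun x hx => hL ⟨hx.1, .inr (Set.mem_iUnion_of_mem b hx.2)⟩)
      hRT hT hadj

lemma enlarge_root (h : IsBinaryTree G L n T R) (hR' : ConnectedOn G R') (hR : R ⊆ R')
    (hT : R' ∩ T ⊆ R) : IsBinaryTree G L n (R' ∪ T) R' := by
  cases h with
  | leaf _ hL =>
    rw [Set.union_eq_left.2 hR]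
    exact .leaf hR' (hL.mono (Set.inter_subset_inter_left _ hR))
  | @node _ _ T _ _ h hRT hTT hadj =>
    rw [← Set.union_assoc, Set.union_eq_left.2 hR]
    refine .node hR' h (fun b => Set.disjoint_left.2 fun x hx hxT => ?_) hTT
      fun b => (hadj b).mono hR subset_rfl
    exact Set.disjoint_left.1 (hRT b) (hT ⟨hx, .inr (Set.mem_iUnion_of_mem b hxT)⟩) hxT

lemma exists_insert {x : V} (h : IsBinaryTree G L n T R) (hu : u ∉ T) (hx : x ∈ T)
    (hxu : G.Adj x u) : ∃ R', R ⊆ R' ∧ IsBinaryTree G L n (insert u T) R' := by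
  induction h with
  | leaf hR hL =>
    refine ⟨_, Set.subset_insert _ _, .leaf ?_ (hL.mono (Set.inter_subset_inter_left _
      (Set.subset_insert _ _)))⟩
    rw [← Set.union_singleton]
    exact hR.union_of_setAdj (.singleton u) ⟨x, hx, u, rfl, hxu⟩
  | @node n R T S hR h hRT hTT hRS ih =>
    by_cases hRu : SetAdj G R {u}
    · refine ⟨R ∪ {u}, Set.subset_union_left, ?_⟩
      have := (node hR h hRT hTT hRS).enlarge_root (hR.union_of_setAdj (.singleton u) hRu)
        Set.subset_union_left (by grind)
      convert this using 1
      grind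
    obtain hx | hx := hx
    · exact (hRu ⟨x, hx, u, rfl, hxu⟩).elim
    obtain ⟨b, hxb⟩ := Set.mem_iUnion.1 hx
    have huR : u ∉ R := fun hc => hu (.inl hc)
    have huT c : u ∉ T c := fun hc => hu (.inr (Set.mem_iUnion_of_mem c hc))
    obtain ⟨S', hS', hb⟩ := ih b (huT b) hxb
    have hunion : insert u (R ∪ ⋃ c, T c) =
        R ∪ ⋃ c, Function.update T b (insert u (T b)) c := by
      ext v
      cases b <;> simp [Function.update] <;> tauto
    refine ⟨R, subset_rfl, hunion ▸ .node (S := Function.update S b S') hR ?_ ?_ ?_ ?_⟩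
    all_goals intro c
    · obtain rfl | hc := eq_or_ne c b
      · simpa using hb
      · simpa [hc] using h c
    · obtain rfl | hc := eq_or_ne c b
      · simpa [huR] using hRT c
      · simpa [hc] using hRT c
    · have := hTT c
      cases b <;> cases c <;> simpa [Function.update, huT] using this
    · obtain rfl | hc := eq_or_ne c b
      · simpa using (hRS c).mono subset_rfl hS'
      · simpa [hc] using hRS c

lemma exists_spanning [Finite V] (h : IsBinaryTree G L n T R) (hB : ConnectedOn G B)
    (hTB : T ⊆ B) : ∃ R', R ⊆ R' ∧ IsBinaryTree G L n B R' := by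
  obtain ⟨D, -, hD⟩ := Finite.exists_le_maximal
    (p := fun D : Set V => D ⊆ B ∧ ∃ R', R ⊆ R' ∧ IsBinaryTree G L n D R') ⟨hTB, R, subset_rfl, h⟩
  obtain ⟨hDB, R', hR, hDR'⟩ := hD.prop
  obtain rfl | ⟨b, hb, hbD⟩ := hDB.eq_or_ssubset.imp_right Set.exists_of_ssubset
  · exact ⟨R', hR, hDR'⟩
  obtain ⟨d, hd⟩ := hDR'.connected.nonempty
  obtain ⟨x, ⟨-, hx⟩, y, ⟨hyB, hy⟩, hxy⟩ :=
    (hB.reachableIn (hDB hd) hb).exists_boundary_adj hd hbD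
  obtain ⟨R₂, hR₂, h₂⟩ := hDR'.exists_insert hy hx hxy
  exact (hy (hD.le_of_ge ⟨Set.insert_subset hyB hDB, R₂, hR.trans hR₂, h₂⟩
    (Set.subset_insert y D) (Set.mem_insert y D))).elim

lemma isProperSubtree_child {T S : Bool → Set V} (hR : ConnectedOn G R)
    (h : ∀ b, IsBinaryTree G L n (T b) (S b)) (hRT : ∀ b, Disjoint R (T b))
    (hTT : ∀ b, Disjoint (T b) (T !b)) (hRS : ∀ b, SetAdj G R (S b)) (b : Bool) :
    IsProperSubtree G (R ∪ ⋃ b, T b) R (T b) (S b) := by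
  have hsdiff : (R ∪ ⋃ b, T b) \ T b = R ∪ T !b := by
    ext v
    have hRv : v ∈ R → v ∉ T b := fun hv => Set.disjoint_left.1 (hRT b) hv
    have hTv : v ∈ T b → v ∉ T !b := fun hv => Set.disjoint_left.1 (hTT b) hv
    cases b <;> simp at hRv hTv ⊢ <;> tauto
  exact ⟨fun x hx => .inr (Set.mem_iUnion_of_mem b hx),
    hsdiff ▸ hR.union_of_setAdj (h _).connected ((hRS _).mono subset_rfl (h _).root_subset),
    hsdiff ▸ Set.subset_union_left,
    hsdiff ▸ (hRS b).mono Set.subset_union_left subset_rfl⟩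

lemma exists_leaves_or_exists_subtree (L : Set V) (h : IsBinaryTree G Set.univ (n + k) X R) :
    (∃ R', R ⊆ R' ∧ IsBinaryTree G L k X R') ∨
      ∃ Y R', IsBinaryTree G Set.univ n Y R' ∧ Disjoint Y L ∧ IsSubtree G X R Y R' := by
  induction k generalizing X R with
  | zero =>
    by_cases hL : Disjoint X L
    · exact .inr ⟨X, R, h, hL, .inl ⟨rfl, rfl⟩⟩
    · exact .inl ⟨X, h.root_subset, .leaf h.connected (Set.not_disjoint_iff_nonempty_inter.1 hL)⟩
  | succ k ih =>
    cases h with | @node _ _ T S hR h hRT hTT hRS =>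
    by_cases hleaves : ∀ b, ∃ R', S b ⊆ R' ∧ IsBinaryTree G L k (T b) R'
    · choose S' hS' hT' using hleaves
      exact .inl ⟨R, subset_rfl, .node hR hT' hRT hTT fun b => (hRS b).mono subset_rfl (hS' b)⟩
    · push Not at hleaves
      obtain ⟨b, hb⟩ := hleaves
      obtain ⟨R', hR', hT'⟩ | ⟨Y, R', hY, hYL, hsub⟩ := ih (h b)
      · exact (hb R' hR' hT').elim
      · have hchild := isProperSubtree_child hR h hRT hTT hRS b
        exact .inr ⟨Y, R', hY, hYL, .inr (hchild.trans_isSubtree hsub)⟩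

end IsBinaryTree

/-- The family indexed by lists of moves with value `C` at the empty list and `g b` below the first
move `b`. -/
def branch (C : Set V) (g : Bool → List Bool → Set V) : List Bool → Set V
  | [] => C
  | b :: σ => g b σ

lemma pairwiseDisjoint_branch {g : Bool → List Bool → Set V} {T : Bool → Set V}
    (hg : ∀ b, {σ | σ.length < n}.PairwiseDisjoint (g b))
    (hgT : ∀ b σ, σ.length < n → g b σ ⊆ T b) (hC : ∀ b, Disjoint C (T b))
    (hT : ∀ b, Disjoint (T b) (T !b)) :
    {σ | σ.length < n + 1}.PairwiseDisjoint (branch C g) := by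
  rintro (_ | ⟨b, σ⟩) hσ (_ | ⟨c, τ⟩) hτ hne
  · exact (hne rfl).elim
  · exact (hC c).mono_right (hgT c τ (Nat.lt_of_succ_lt_succ hτ))
  · exact ((hC b).mono_right (hgT b σ (Nat.lt_of_succ_lt_succ hσ))).symm
  have hσ' := Nat.lt_of_succ_lt_succ hσ
  have hτ' := Nat.lt_of_succ_lt_succ hτ
  obtain rfl | hbc := eq_or_ne b c
  · exact hg b hσ' hτ' fun h => hne (h ▸ rfl)
  · have hc : c = !b := Bool.eq_not.2 hbc.symm
    exact (hT b).mono (hgT b σ hσ') (hc ▸ hgT c τ hτ')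

/-- The sets `g σ`, for `σ` of length at most `n`, are the branch sets of a minor model in `G` of
the binary tree of height `n`. Here `σ` lists the moves starting from the root. -/
structure IsBinaryModel (G : SimpleGraph V) (n : ℕ) (g : List Bool → Set V) : Prop where
  connected : ∀ σ, σ.length < n + 1 → ConnectedOn G (g σ)
  disjoint : {σ | σ.length < n + 1}.PairwiseDisjoint g
  setAdj : ∀ σ b, σ.length < n → SetAdj G (g σ) (g (σ ++ [b]))

lemma IsBinaryTree.exists_isBinaryModel (h : IsBinaryTree G L n T R) :
    ∃ g, IsBinaryModel G n g ∧ g [] = R ∧ (∀ σ, σ.length < n + 1 → g σ ⊆ T) ∧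
      ∀ σ, σ.length = n → (g σ ∩ L).Nonempty := by
  induction h with
  | @leaf R hR hL =>
    refine ⟨fun _ => R, ⟨fun _ _ => hR, ?_, by simp⟩, rfl, fun _ _ => subset_rfl, fun _ _ => hL⟩
    intro σ hσ τ hτ hne
    simp_all
  | @node n R T S hR _ hRT hTT hRS ih =>
    choose g hg hgS hgT hgL using ih
    refine ⟨branch R g, ⟨?_, pairwiseDisjoint_branch (fun b => (hg b).disjoint) hgT hRT hTT, ?_⟩,
      rfl, ?_, ?_⟩
    · rintro (_ | ⟨b, σ⟩) hσ
      exacts [hR, (hg b).connected σ (Nat.lt_of_succ_lt_succ hσ)]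
    · rintro (_ | ⟨b, σ⟩) c hσ
      · simpa only [List.nil_append, branch, hgS] using hRS c
      · exact (hg b).setAdj σ c (Nat.lt_of_succ_lt_succ hσ)
    · rintro (_ | ⟨b, σ⟩) hσ
      exacts [Set.subset_union_left, (hgT b σ (Nat.lt_of_succ_lt_succ hσ)).trans
        (Set.subset_union_of_subset_right (Set.subset_iUnion T b) R)]
    · rintro (_ | ⟨b, σ⟩) hσ
      exacts [(Nat.succ_ne_zero n hσ.symm).elim, hgL b σ (Nat.succ_injective hσ)]

lemma IsBinaryModel.exists_isBinaryTree {g : List Bool → Set V} (hg : IsBinaryModel G n g) :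
    ∃ T, IsBinaryTree G Set.univ n T (g []) ∧ T ⊆ ⋃ σ ∈ {σ | σ.length < n + 1}, g σ := by
  induction n generalizing g with
  | zero =>
    have hroot := hg.connected [] (by simp)
    exact ⟨g [], .leaf hroot (by simpa using hroot.nonempty), fun x hx => by simpa using hx⟩
  | succ n ih =>
    have hchild b : IsBinaryModel G n fun σ => g (b :: σ) :=
      ⟨fun σ hσ => hg.connected _ (Nat.succ_lt_succ hσ),
        fun σ hσ τ hτ hne => hg.disjoint (Nat.succ_lt_succ hσ) (Nat.succ_lt_succ hτ) (by simpa),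
        fun σ c hσ => hg.setAdj _ c (Nat.succ_lt_succ hσ)⟩
    choose T hT hTg using fun b => ih (hchild b)
    refine ⟨g [] ∪ ⋃ b, T b, .node (hg.connected [] (by simp)) hT (fun b => ?_) (fun b => ?_)
      fun b => hg.setAdj [] b (by simp), Set.union_subset ?_ (Set.iUnion_subset fun b => ?_)⟩
    · refine Set.disjoint_of_subset_right (hTg b) ?_
      simp only [Set.disjoint_iUnion_right]
      exact fun σ hσ => hg.disjoint (by simp) (Nat.succ_lt_succ hσ) (by simp)
    · refine Set.disjoint_of_subset (hTg b) (hTg !b) ?_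
      simp only [Set.disjoint_iUnion_left, Set.disjoint_iUnion_right]
      exact fun σ hσ τ hτ => hg.disjoint (Nat.succ_lt_succ hτ) (Nat.succ_lt_succ hσ) (by simp)
    · exact Set.subset_biUnion_of_mem (u := g) (by simp)
    · refine (hTg b).trans (Set.iUnion₂_subset fun σ hσ => ?_)
      exact Set.subset_biUnion_of_mem (u := g) (Nat.succ_lt_succ hσ)

/-- The position of the node reached by the reversed list of moves `σ` in the breadth-first
enumeration of the infinite binary tree. -/
def heapIndex : List Bool → ℕ
  | [] => 0
  | b :: σ => 2 * heapIndex σ + 1 + b.toNat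

lemma heapIndex_injective : Function.Injective heapIndex
  | [], [], _ => rfl
  | [], _ :: _, h => by simp only [heapIndex] at h; lia
  | _ :: _, [], h => by simp only [heapIndex] at h; lia
  | b :: σ, c :: τ, h => by
    simp only [heapIndex] at h
    have := b.toNat_lt
    have := c.toNat_lt
    have hbc : b = c := by cases b <;> cases c <;> simp only [Bool.toNat] at h ⊢ <;> grind
    rw [heapIndex_injective (show heapIndex σ = heapIndex τ by lia), hbc]

lemma heapIndex_add_two_le (σ : List Bool) : heapIndex σ + 2 ≤ 2 ^ (σ.length + 1) := by
  induction σ with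
  | nil => simp [heapIndex]
  | cons b σ ih =>
    have := b.toNat_lt
    simp only [heapIndex, List.length_cons, pow_succ] at *
    lia

lemma heapIndex_lt {σ : List Bool} (h : σ.length < n + 1) : heapIndex σ < 2 ^ (n + 1) - 1 := by
  have := heapIndex_add_two_le σ
  have : 2 ^ (σ.length + 1) ≤ 2 ^ (n + 1) := Nat.pow_le_pow_right two_pos h
  lia

theorem exists_isBinaryTree_of_le_pathwidth [Fintype V] (h : 2 ^ (n + 1) - 1 ≤ pathwidth G) :
    ∃ T R, IsBinaryTree G Set.univ n T R := by
  obtain ⟨U, hU, hdisj, hparent⟩ :=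
    exists_forest_of_le_pathwidth (parent := fun j => (j - 1) / 2) h fun j hj => by lia
  have hindex {σ : List Bool} (hσ : σ.length < n + 1) :
      heapIndex σ.reverse < 2 ^ (n + 1) - 1 :=
    heapIndex_lt (by simpa using hσ)
  have hmodel : IsBinaryModel G n fun σ => U (heapIndex σ.reverse) := by
    refine ⟨fun σ hσ => hU _ (hindex hσ), fun σ hσ τ hτ hne => ?_, fun σ b hσ => ?_⟩
    · exact hdisj (hindex hσ) (hindex hτ)
        ((heapIndex_injective.comp List.reverse_injective).ne hne)
    · have hlt := hindex (σ := σ ++ [b]) (by simpa using hσ)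
      have := b.toNat_lt
      simp only [List.reverse_append, List.reverse_singleton, List.singleton_append,
        heapIndex] at hlt ⊢
      have hadj := hparent _ hlt (by lia)
      rw [show (2 * heapIndex σ.reverse + 1 + b.toNat - 1) / 2 = heapIndex σ.reverse by lia]
        at hadj
      exact hadj.symm
  obtain ⟨T, hT, -⟩ := hmodel.exists_isBinaryTree
  exact ⟨T, _, hT⟩

lemma setAdj_of_fromEdgeSet_adj {W : Type*} {E : Set (Sym2 W)} {f : W → Set V} {x y : W}
    (h : ∀ e ∈ E, ∃ a b, e = s(a, b) ∧ SetAdj G (f a) (f b)) (hxy : (fromEdgeSet E).Adj x y) :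
    SetAdj G (f x) (f y) := by
  obtain ⟨a, b, he, hab⟩ := h _ ((fromEdgeSet_adj E).1 hxy).1
  obtain ⟨rfl, rfl⟩ | ⟨rfl, rfl⟩ := Sym2.eq_iff.1 he
  exacts [hab, hab.symm]

theorem IsBinaryTree.isMinor_Pgraph (h : IsBinaryTree G (neighborhood G A) k T R)
    (hA : ConnectedOn G A) (hAT : Disjoint A T) : IsMinor (Pgraph k) G := by
  obtain ⟨g, hg, -, hgT, hgA⟩ := h.exists_isBinaryModel
  have hlen (l : CTVert k) : l.1.reverse.length < k + 1 := by simpa using Nat.lt_succ_of_le l.2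
  let f : Option (CTVert k) → Set V := fun w => w.elim A fun l => g l.1.reverse
  have hf : ∀ w, ConnectedOn G (f w) := by
    rintro (_ | l)
    exacts [hA, hg.connected _ (hlen l)]
  refine ⟨f, fun w => (hf w).nonempty, hf, ?_, fun v w => setAdj_of_fromEdgeSet_adj ?_⟩
  · rintro (_ | l) (_ | m) hne
    · exact (hne rfl).elim
    · exact hAT.mono_right (hgT _ (hlen m))
    · exact (hAT.mono_right (hgT _ (hlen l))).symm
    · refine hg.disjoint (hlen l) (hlen m) fun heq => hne ?_
      rw [Subtype.ext (List.reverse_injective heq)]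
  · rintro e (⟨b, σ, hσ, rfl⟩ | ⟨l, hl, rfl⟩)
    · refine ⟨_, _, rfl, ?_⟩
      simpa [f] using hg.setAdj σ.reverse b (by simpa using hσ)
    · obtain ⟨v, hv, u, hu, huv⟩ := hgA l.1.reverse (by simpa using hl)
      exact ⟨none, some l, rfl, u, hu, v, hv, huv⟩

end BinaryTree

/-! ### Series-parallel models -/

section QModel

variable {V : Type*} {G : SimpleGraph V} {A A' A'' B B' B'' C D D' D'' : Set V}
  {S : Bool → Set V} {j k n : ℕ}

/-- `A` and `B` are adjacent, or both are adjacent to some connected subset of `D`. -/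
def IsLinked (G : SimpleGraph V) (D A B : Set V) : Prop :=
  SetAdj G A B ∨ ∃ K ⊆ D, ConnectedOn G K ∧ SetAdj G A K ∧ SetAdj G B K

/-- `A` and `B` are disjoint connected sets, both disjoint from `D`. -/
structure IsEndPair (G : SimpleGraph V) (D A B : Set V) : Prop where
  left_connected : ConnectedOn G A
  right_connected : ConnectedOn G B
  disjoint : Disjoint A B
  left_disjoint : Disjoint A D
  right_disjoint : Disjoint B D

/-- `C` is a connected subset of `D`, and the rest of `D` contains the two disjoint sides `S false`
and `S true`. In the recursive definitions below, `C` is the apex of the triangle of `𝒬_j` on the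
base edge, and the two smaller models live in the two sides. -/
structure IsMiddle (G : SimpleGraph V) (D C : Set V) (S : Bool → Set V) : Prop where
  connected : ConnectedOn G C
  subset : C ⊆ D
  side_subset : ∀ b, S b ⊆ D
  disjoint_side : ∀ b, Disjoint C (S b)
  disjoint : ∀ b, Disjoint (S b) (S !b)

/-- A minor model of `𝒬_j` without its base edge, except that every apex need only be adjacent to
one of its two ends. The ends of the base edge are `A` and `B`, and all other branch sets lie
in `D`. -/
inductive IsWeakQModel (G : SimpleGraph V) : ℕ → Set V → Set V → Set V → Prop
  | zero {D A B : Set V} (isLinked : IsLinked G D A B) : IsWeakQModel G 0 D A B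
  | succ {j : ℕ} {D A B C : Set V} {S : Bool → Set V} (isMiddle : IsMiddle G D C S)
      (setAdj : ∃ b, SetAdj G (cond b B A) C)
      (side : ∀ b, IsWeakQModel G j (S b) (cond b B A) C) : IsWeakQModel G (j + 1) D A B

/-- A minor model of `𝒬_j` without its base edge. The ends of the base edge are `A` and `B`, and
all other branch sets lie in `D`. -/
inductive IsQModel (G : SimpleGraph V) : ℕ → Set V → Set V → Set V → Prop
  | zero (D A B : Set V) : IsQModel G 0 D A B
  | succ {j : ℕ} {D A B C : Set V} {S : Bool → Set V} (isMiddle : IsMiddle G D C S)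
      (setAdj : ∀ b, SetAdj G (cond b B A) C)
      (side : ∀ b, IsQModel G j (S b) (cond b B A) C) : IsQModel G (j + 1) D A B

/-- `A'` and `B'` arise from `A` and `B` by adding disjoint parts of `D`, whereupon they are
connected, disjoint and adjacent, and `D'` is contained in what is left of `D`. -/
structure IsEnlargement (G : SimpleGraph V) (D A B D' A' B' : Set V) : Prop
    extends IsEndPair G D' A' B' where
  left_le : A ⊆ A'
  left_subset : A' ⊆ A ∪ D
  right_le : B ⊆ B'
  right_subset : B' ⊆ B ∪ D
  rest_subset : D' ⊆ D
  setAdj : SetAdj G A' B'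

lemma cond_subset_cond (hA : A ⊆ A') (hB : B ⊆ B') (b : Bool) : cond b B A ⊆ cond b B' A' := by
  cases b
  exacts [hA, hB]

namespace IsLinked

lemma symm (h : IsLinked G D A B) : IsLinked G D B A :=
  h.imp SetAdj.symm fun ⟨K, hKD, hK, hA, hB⟩ => ⟨K, hKD, hK, hB, hA⟩

lemma mono (h : IsLinked G D A B) (hD : D ⊆ D') (hA : A ⊆ A') (hB : B ⊆ B') :
    IsLinked G D' A' B' :=
  h.imp (·.mono hA hB) fun ⟨K, hKD, hK, hAK, hBK⟩ =>
    ⟨K, hKD.trans hD, hK, hAK.mono hA subset_rfl, hBK.mono hB subset_rfl⟩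

lemma exists_superset_setAdj (h : IsLinked G D A C) (hC : ConnectedOn G C) :
    ∃ C', C ⊆ C' ∧ C' ⊆ C ∪ D ∧ ConnectedOn G C' ∧ SetAdj G A C' := by
  obtain h | ⟨K, hKD, hK, hAK, hCK⟩ := h
  · exact ⟨C, subset_rfl, Set.subset_union_left, hC, h⟩
  · exact ⟨C ∪ K, Set.subset_union_left, Set.union_subset_union_right C hKD,
      hC.union_of_setAdj hK hCK, hAK.mono subset_rfl Set.subset_union_right⟩

end IsLinked

lemma IsEndPair.symm (h : IsEndPair G D A B) : IsEndPair G D B A :=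
  ⟨h.2, h.1, h.3.symm, h.5, h.4⟩

lemma IsEndPair.cond_disjoint (h : IsEndPair G D A B) (b : Bool) : Disjoint (cond b B A) D := by
  cases b
  exacts [h.left_disjoint, h.right_disjoint]

lemma IsEndPair.cond_left (h : IsEndPair G D A B) (hC : IsMiddle G D C S) (b : Bool) :
    IsEndPair G (S b) (cond b B A) C := by
  cases b
  exacts [⟨h.1, hC.connected, h.4.mono_right hC.subset, h.4.mono_right (hC.side_subset _),
      hC.disjoint_side _⟩,
    ⟨h.2, hC.connected, h.5.mono_right hC.subset, h.5.mono_right (hC.side_subset _),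
      hC.disjoint_side _⟩]

namespace IsMiddle

lemma mono (h : IsMiddle G D C S) (hD : D ⊆ D') : IsMiddle G D' C S :=
  ⟨h.1, h.2.trans hD, fun b => (h.3 b).trans hD, h.4, h.5⟩

lemma comp_not (h : IsMiddle G D C S) : IsMiddle G D C fun b => S !b :=
  ⟨h.1, h.2, fun b => h.3 !b, fun b => h.4 !b, fun b => h.5 !b⟩

end IsMiddle

namespace IsWeakQModel

lemma mono (h : IsWeakQModel G j D A B) (hD : D ⊆ D') (hA : A ⊆ A') (hB : B ⊆ B') :
    IsWeakQModel G j D' A' B' := by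
  induction h generalizing D' A' B' with
  | zero h => exact .zero (h.mono hD hA hB)
  | succ hC hadj _ ih =>
    exact .succ (hC.mono hD) (hadj.imp fun b hb => hb.mono (cond_subset_cond hA hB b) subset_rfl)
      fun b => ih b subset_rfl (cond_subset_cond hA hB b) subset_rfl

lemma symm (h : IsWeakQModel G j D A B) : IsWeakQModel G j D B A := by
  cases h with
  | zero h => exact .zero h.symm
  | succ hC hadj hside =>
    refine .succ hC.comp_not ?_ fun b => ?_
    · obtain ⟨b, hb⟩ := hadj
      exact ⟨!b, by cases b <;> exact hb⟩
    · have := hside !b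
      cases b <;> exact this

lemma isLinked (h : IsWeakQModel G j D A B) : IsLinked G D A B := by
  induction h with
  | zero h => exact h
  | @succ _ D A B C S hC _ _ ih =>
    choose C' hCC' hC'S hC' hadj using fun b => (ih b).exists_superset_setAdj hC.connected
    have hC'D b : C' b ⊆ D := (hC'S b).trans (Set.union_subset hC.subset (hC.side_subset b))
    obtain ⟨x, hx⟩ := hC.connected.nonempty
    exact .inr ⟨C' false ∪ C' true, Set.union_subset (hC'D _) (hC'D _),
      (hC' _).union_of_inter_nonempty (hC' _) ⟨x, hCC' _ hx, hCC' _ hx⟩,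
      (hadj false).mono subset_rfl Set.subset_union_left,
      (hadj true).mono subset_rfl Set.subset_union_right⟩

end IsWeakQModel

namespace IsEnlargement

lemma symm (h : IsEnlargement G D A B D' A' B') : IsEnlargement G D B A D' B' A' :=
  ⟨h.toIsEndPair.symm, h.4, h.5, h.2, h.3, h.6, h.7.symm⟩

lemma trans (h : IsEnlargement G D A B D' A' B') (h' : IsEnlargement G D' A' B' D'' A'' B'') :
    IsEnlargement G D A B D'' A'' B'' :=
  ⟨h'.toIsEndPair, h.2.trans h'.2,
    h'.3.trans (Set.union_subset h.3 (h.6.trans Set.subset_union_right)), h.4.trans h'.4,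
    h'.5.trans (Set.union_subset h.5 (h.6.trans Set.subset_union_right)), h'.6.trans h.6, h'.7⟩

end IsEnlargement

lemma IsWeakQModel.exists_isEnlargement (h : IsWeakQModel G (n + 1) D A B)
    (hAB : IsEndPair G D A B) :
    ∃ D' A' B', IsEnlargement G D A B D' A' B' ∧ IsWeakQModel G n D' A' B' := by
  obtain _ | @⟨_, _, _, _, C, S, hC, ⟨b, hb⟩, hS⟩ := h
  wlog hbf : b = false generalizing A B b S
  · obtain ⟨D', B', A', hE, hD'⟩ := this hAB.symm hC.comp_not
      (fun c => by cases c <;> exact hS _) (!b) (by cases b <;> exact hb) (by simpa using hbf)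
    exact ⟨D', A', B', hE.symm, hD'.symm⟩
  subst hbf
  obtain ⟨C', hCC', hC'S, hC', hBC'⟩ := (hS true).isLinked.exists_superset_setAdj hC.connected
  have hC'D : C' ⊆ D := hC'S.trans (Set.union_subset hC.subset (hC.side_subset true))
  have hC'S' : Disjoint C' (S false) := Set.disjoint_of_subset_left hC'S
    (Set.disjoint_union_left.2 ⟨hC.disjoint_side false, hC.disjoint true⟩)
  have hCB : C ⊆ B ∪ C' := hCC'.trans Set.subset_union_right
  have hends : IsEndPair G (S false) A (B ∪ C') :=
    { left_connected := hAB.left_connected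
      right_connected := hAB.right_connected.union_of_setAdj hC' hBC'
      disjoint := Set.disjoint_union_right.2 ⟨hAB.disjoint, hAB.left_disjoint.mono_right hC'D⟩
      left_disjoint := hAB.left_disjoint.mono_right (hC.side_subset false)
      right_disjoint := Set.disjoint_union_left.2
        ⟨hAB.right_disjoint.mono_right (hC.side_subset false), hC'S'⟩ }
  exact ⟨S false, A, B ∪ C',
    ⟨hends, subset_rfl, Set.subset_union_left, Set.subset_union_left,
      Set.union_subset_union_right B hC'D, hC.side_subset false, hb.mono subset_rfl hCB⟩,
    (hS false).mono subset_rfl subset_rfl hCB⟩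

namespace IsQModel

lemma mono (h : IsQModel G j D A B) (hA : A ⊆ A') (hB : B ⊆ B') : IsQModel G j D A' B' := by
  induction h generalizing A' B' with
  | zero => exact .zero _ _ _
  | succ hC hadj _ ih =>
    exact .succ hC (fun b => (hadj b).mono (cond_subset_cond hA hB b) subset_rfl)
      fun b => ih b (cond_subset_cond hA hB b) subset_rfl

end IsQModel

section BothSides

variable {E X C' : Bool → Set V} (hAB : IsEndPair G D A B) (hC : IsMiddle G D C S)
  (hE : ∀ b, IsEnlargement G (S b) (cond b B A) C (E b) (X b) (C' b))

include hAB hC hE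

lemma disjoint_opposite_side (b : Bool) : Disjoint (X !b) (C ∪ S b) := by
  refine Set.disjoint_union_right.2 ⟨(hE !b).disjoint.mono_right (hE !b).right_le, ?_⟩
  refine Set.disjoint_of_subset_left (hE !b).left_subset (Set.disjoint_union_left.2 ⟨?_, ?_⟩)
  · exact (hAB.cond_disjoint !b).mono_right (hC.side_subset b)
  · exact (hC.disjoint b).symm

lemma isEnlargement_both_sides (hadj : SetAdj G A B) :
    IsEnlargement G D A B (D \ (X false ∪ X true)) (X false) (X true) where
  left_connected := (hE false).left_connected
  right_connected := (hE true).left_connected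
  disjoint := by
    refine Set.disjoint_of_subset_left (hE false).left_subset (Set.disjoint_union_left.2 ⟨?_, ?_⟩)
    · refine Set.disjoint_of_subset_right (hE true).left_subset (Set.disjoint_union_right.2 ?_)
      exact ⟨hAB.disjoint, hAB.left_disjoint.mono_right (hC.side_subset true)⟩
    · exact ((disjoint_opposite_side hAB hC hE false).mono_right Set.subset_union_right).symm
  left_disjoint := Set.disjoint_sdiff_right.mono_left Set.subset_union_left
  right_disjoint := Set.disjoint_sdiff_right.mono_left Set.subset_union_right
  left_le := (hE false).left_le
  left_subset := (hE false).left_subset.trans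
    (Set.union_subset_union_right A (hC.side_subset false))
  right_le := (hE true).left_le
  right_subset := (hE true).left_subset.trans
    (Set.union_subset_union_right B (hC.side_subset true))
  rest_subset := Set.sdiff_subset
  setAdj := hadj.mono (hE false).left_le (hE true).left_le

/-- The two enlarged copies of the apex overlap in `C`, so their union is an apex between the two
enlarged ends. -/
lemma isMiddle_both_sides :
    IsMiddle G (D \ (X false ∪ X true)) (C' false ∪ C' true) E := by
  have hrest b {Y : Set V} (hY : Disjoint (X b) Y) (hYS : Y ⊆ C ∪ S b) :
      Y ⊆ D \ (X false ∪ X true) := by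
    have hY' := (disjoint_opposite_side hAB hC hE b).mono_right hYS
    refine Set.subset_sdiff.2
      ⟨hYS.trans (Set.union_subset hC.subset (hC.side_subset b)), Set.disjoint_union_right.2 ?_⟩
    cases b
    exacts [⟨hY.symm, hY'.symm⟩, ⟨hY'.symm, hY.symm⟩]
  have hC'E b : Disjoint (C' b) (E !b) := by
    refine Set.disjoint_of_subset_left (hE b).right_subset (Set.disjoint_union_left.2 ⟨?_, ?_⟩)
    · exact (hE !b).right_disjoint.mono_left (hE !b).right_le
    · exact (hC.disjoint b).mono_right (hE !b).rest_subset
  obtain ⟨x, hx⟩ := hC.connected.nonempty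
  exact
  { connected := (hE false).right_connected.union_of_inter_nonempty (hE true).right_connected
      ⟨x, (hE false).right_le hx, (hE true).right_le hx⟩
    subset := Set.union_subset (hrest _ (hE _).disjoint (hE _).right_subset)
      (hrest _ (hE _).disjoint (hE _).right_subset)
    side_subset := fun b => hrest b (hE b).left_disjoint
      ((hE b).rest_subset.trans Set.subset_union_right)
    disjoint_side := by
      rintro (_ | _)
      exacts [Set.disjoint_union_left.2 ⟨(hE _).right_disjoint, hC'E true⟩,
        Set.disjoint_union_left.2 ⟨hC'E false, (hE _).right_disjoint⟩]
    disjoint := fun b => (hC.disjoint b).mono (hE b).rest_subset (hE !b).rest_subset }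

lemma isQModel_both_sides (hQ : ∀ b, IsQModel G j (E b) (X b) (C' b)) :
    IsQModel G (j + 1) (D \ (X false ∪ X true)) (X false) (X true) := by
  refine .succ (isMiddle_both_sides hAB hC hE) ?_ ?_
  · rintro (_ | _)
    exacts [(hE false).setAdj.mono subset_rfl Set.subset_union_left,
      (hE true).setAdj.mono subset_rfl Set.subset_union_right]
  · rintro (_ | _)
    exacts [(hQ false).mono subset_rfl Set.subset_union_left,
      (hQ true).mono subset_rfl Set.subset_union_right]

end BothSides

/-- Each level of a model costs two levels of a weak one: the first makes the ends adjacent. -/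
lemma IsWeakQModel.exists_isQModel (h : IsWeakQModel G (2 * j + 1) D A B)
    (hAB : IsEndPair G D A B) :
    ∃ D' A' B', IsEnlargement G D A B D' A' B' ∧ IsQModel G j D' A' B' := by
  induction j generalizing D A B with
  | zero =>
    obtain ⟨D', A', B', hE, -⟩ := h.exists_isEnlargement hAB
    exact ⟨D', A', B', hE, .zero _ _ _⟩
  | succ j ih =>
    obtain ⟨D', A', B', hE, h'⟩ := h.exists_isEnlargement hAB
    obtain _ | ⟨hC, -, hS⟩ := h'
    choose E X C' hE' hQ using fun b => ih (hS b) (hE.toIsEndPair.cond_left hC b)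
    exact ⟨_, _, _, hE.trans (isEnlargement_both_sides hE.toIsEndPair hC hE' hE.setAdj),
      isQModel_both_sides hE.toIsEndPair hC hE' hQ⟩

/-- The ends of the base edge of the copy of `𝒬_i` hanging from the node `σ`, when `A` and `B` are
the ends of the base edge at the root and `g τ` is the apex at the node `τ`. Here `σ` lists the
moves starting from the root, in the opposite order to `qbase`. -/
def baseEnds (A B : Set V) (g : List Bool → Set V) : List Bool → Set V × Set V
  | [] => (A, B)
  | b :: σ => baseEnds (cond b B A) (g []) (fun τ => g (b :: τ)) σ

lemma baseEnds_concat (A B : Set V) (g : List Bool → Set V) (σ : List Bool) (b : Bool) :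
    baseEnds A B g (σ ++ [b]) =
      (cond b (baseEnds A B g σ).2 (baseEnds A B g σ).1, g σ) := by
  induction σ generalizing A B g with
  | nil => rfl
  | cons _ _ ih => exact ih _ _ _

lemma IsQModel.exists_branchSets (h : IsQModel G k D A B) :
    ∃ g : List Bool → Set V, (∀ σ, σ.length < k → ConnectedOn G (g σ)) ∧
      (∀ σ, σ.length < k → g σ ⊆ D) ∧ {σ | σ.length < k}.PairwiseDisjoint g ∧
      ∀ σ, σ.length < k →
        SetAdj G (g σ) (baseEnds A B g σ).1 ∧ SetAdj G (g σ) (baseEnds A B g σ).2 := by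
  induction h with
  | zero => exact ⟨fun _ => ∅, by simp, by simp, by simp, by simp⟩
  | @succ k D A B C S hC hadj _ ih =>
    choose g hg hgS hdisj hgadj using ih
    refine ⟨branch C g, ?_, ?_, pairwiseDisjoint_branch hdisj hgS hC.disjoint_side hC.disjoint, ?_⟩
    · rintro (_ | ⟨b, _⟩) hσ
      exacts [hC.connected, hg b _ (Nat.lt_of_succ_lt_succ hσ)]
    · rintro (_ | ⟨b, σ⟩) hσ
      exacts [hC.subset, (hgS b σ (Nat.lt_of_succ_lt_succ hσ)).trans (hC.side_subset b)]
    · rintro (_ | ⟨b, σ⟩) hσ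
      exacts [⟨(hadj false).symm, (hadj true).symm⟩, hgadj b σ (Nat.lt_of_succ_lt_succ hσ)]

lemma map_qbase_eq_baseEnds {f : QVert k → Set V} {g : List Bool → Set V}
    (hA : f (.inl false) = A) (hB : f (.inl true) = B) (hg : ∀ l, f (.inr l) = g l.1.reverse)
    {σ : List Bool} (hσ : σ.length ≤ k) :
    (f (qbase k σ).1, f (qbase k σ).2) = baseEnds A B g σ.reverse := by
  induction σ with
  | nil => exact Prod.ext hA hB
  | cons b σ ih =>
    have hσ' : σ.length < k := hσ
    rw [List.reverse_cons, baseEnds_concat, ← ih hσ'.le]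
    simp only [qbase, hσ', dif_pos, hg]
    cases b <;> rfl

theorem IsQModel.isMinor_Qgraph (h : IsQModel G k D A B) (hAB : IsEndPair G D A B)
    (hadj : SetAdj G A B) : IsMinor (Qgraph k) G := by
  obtain ⟨g, hg, hgD, hdisj, hgadj⟩ := h.exists_branchSets
  have hlen (l : {l : List Bool // l.length < k}) : l.1.reverse.length < k := by simpa using l.2
  let f : QVert k → Set V := Sum.elim (fun b => cond b B A) fun l => g l.1.reverse
  have hf : ∀ w, ConnectedOn G (f w) := by
    rintro ((_ | _) | l)
    exacts [hAB.left_connected, hAB.right_connected, hg _ (hlen l)]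
  have hapex {σ : List Bool} (hσ : σ.length < k) :
      SetAdj G (f (.inr ⟨σ, hσ⟩)) (f (qbase k σ).1) ∧
        SetAdj G (f (.inr ⟨σ, hσ⟩)) (f (qbase k σ).2) := by
    have hadj := hgadj σ.reverse (hlen ⟨σ, hσ⟩)
    rwa [← map_qbase_eq_baseEnds (f := f) (A := A) (B := B) rfl rfl (fun _ => rfl) hσ.le] at hadj
  have hbaseD b l : Disjoint (f (.inl b)) (f (.inr l)) :=
    (hAB.cond_disjoint b).mono_right (hgD _ (hlen l))
  refine ⟨f, fun w => (hf w).nonempty, hf, ?_, fun v w => setAdj_of_fromEdgeSet_adj ?_⟩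
  · rintro (b | l) (c | m) hne
    · cases b <;> cases c
      exacts [(hne rfl).elim, hAB.disjoint, hAB.disjoint.symm, (hne rfl).elim]
    · exact hbaseD b m
    · exact (hbaseD c l).symm
    · refine hdisj (hlen l) (hlen m) fun heq => hne ?_
      rw [Subtype.ext (List.reverse_injective heq)]
  · rintro e (he | ⟨σ, hσ, rfl | rfl⟩)
    · exact ⟨_, _, he, hadj⟩
    · exact ⟨_, _, rfl, (hapex hσ).1⟩
    · exact ⟨_, _, rfl, (hapex hσ).2⟩

theorem IsWeakQModel.isMinor_Qgraph (h : IsWeakQModel G (2 * k + 1) D A B)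
    (hAB : IsEndPair G D A B) : IsMinor (Qgraph k) G :=
  let ⟨_, _, _, hE, hQ⟩ := h.exists_isQModel hAB
  hQ.isMinor_Qgraph hE.toIsEndPair hE.setAdj

end QModel

/-! ### Rooted models -/

section RootedModel

variable {V : Type*} {G : SimpleGraph V} {A A' B B₁ C C' D D' E S S₁ S₂ T R X Y : Set V}
  {a b u v x y : V} {i j : ℕ}

/-- The set `B` is connected and stays connected when any one vertex is deleted. -/
structure IsTwoConnectedOn (G : SimpleGraph V) (B : Set V) : Prop where
  connected : ConnectedOn G B
  sdiff_singleton : ∀ v, ConnectedOn G (B \ {v})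

/-- `A` and `C` are disjoint connected subsets of `D` containing `a` and `b` respectively. -/
structure IsTerminalPair (G : SimpleGraph V) (D : Set V) (a b : V) (A C : Set V) : Prop where
  left_subset : A ⊆ D
  right_subset : C ⊆ D
  disjoint : Disjoint A C
  left_connected : ConnectedOn G A
  right_connected : ConnectedOn G C
  left_mem : a ∈ A
  right_mem : b ∈ C

/-- `A` and `C` have distinct neighbours in `S`. -/
def AttachesTo (G : SimpleGraph V) (A C S : Set V) : Prop :=
  ∃ x ∈ S ∩ neighborhood G A, ∃ y ∈ S ∩ neighborhood G C, x ≠ y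

/-- The set `B` contains a minor model of `𝒫_i` in which `a` lies in the branch set of the
additional vertex and `b` in that of the root. -/
def HasRootedP (G : SimpleGraph V) (i : ℕ) (B : Set V) (a b : V) : Prop :=
  ∃ A T R, IsTerminalPair G B a b A R ∧ T ⊆ B ∧ Disjoint A T ∧
    IsBinaryTree G (neighborhood G A) i T R

/-- The set `B` contains a weak model of `𝒬_j` in which `a` and `b` lie in the two ends of the
base edge. -/
def HasRootedQ (G : SimpleGraph V) (j : ℕ) (B : Set V) (a b : V) : Prop :=
  ∃ A C, IsTerminalPair G B a b A C ∧ IsWeakQModel G j (B \ (A ∪ C)) A C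

/-- Any two distinct vertices of `B` are the roots of a model of `𝒫_i` or of a weak model of `𝒬_j`
inside `B`. -/
def IsRich (G : SimpleGraph V) (i j : ℕ) (B : Set V) : Prop :=
  ∀ ⦃a⦄, a ∈ B → ∀ ⦃b⦄, b ∈ B → a ≠ b → HasRootedP G i B a b ∨ HasRootedQ G j B a b

/-- Disjoint connected sets in `D` attach `a` and `b` to both `S false` and `S true`, which thus
lie in parallel between `a` and `b`. -/
def HasParallelLink (G : SimpleGraph V) (D : Set V) (S : Bool → Set V) (a b : V) : Prop :=
  ∃ A C, IsTerminalPair G D a b A C ∧ ∀ c, AttachesTo G A C (S c)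

/-- `S₁` and `S₂` lie in series between `a` and `b`: the sets `A ∋ a` and `C` attach to `S₁`, and
`E ∋ b` and `C` attach to `S₂`. Moreover `C` is adjacent to `A` or to `E`. -/
structure IsSeriesLink (G : SimpleGraph V) (D S₁ S₂ : Set V) (a b : V) (A C E : Set V) : Prop
    extends IsTerminalPair G D a b A E where
  middle_connected : ConnectedOn G C
  middle_subset : C ⊆ D
  left_disjoint_middle : Disjoint A C
  right_disjoint_middle : Disjoint E C
  setAdj : SetAdj G A C ∨ SetAdj G E C
  attaches_left : AttachesTo G A C S₁
  attaches_right : AttachesTo G E C S₂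

/-- `S₁` and `S₂` can be linked in series between `a` and `b`, in this order, through `D`. -/
def HasSeriesLink (G : SimpleGraph V) (D S₁ S₂ : Set V) (a b : V) : Prop :=
  ∃ A C E, IsSeriesLink G D S₁ S₂ a b A C E

lemma neighborhood_mono (h : A ⊆ A') : neighborhood G A ⊆ neighborhood G A' :=
  fun _ ⟨u, hu, huv⟩ => ⟨u, h hu, huv⟩

lemma setAdj_of_mem_neighborhood (hv : v ∈ neighborhood G A) (hvS : v ∈ S) : SetAdj G A S :=
  let ⟨u, hu, huv⟩ := hv
  ⟨u, hu, v, hvS, huv⟩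

namespace AttachesTo

lemma symm (h : AttachesTo G A C S) : AttachesTo G C A S :=
  let ⟨x, hx, y, hy, hxy⟩ := h
  ⟨y, hy, x, hx, hxy.symm⟩

lemma mono (h : AttachesTo G A C S) (hA : A ⊆ A') (hC : C ⊆ C') : AttachesTo G A' C' S :=
  let ⟨x, hx, y, hy, hxy⟩ := h
  ⟨x, ⟨hx.1, neighborhood_mono hA hx.2⟩, y, ⟨hy.1, neighborhood_mono hC hy.2⟩, hxy⟩

end AttachesTo

lemma IsTerminalPair.symm (h : IsTerminalPair G D a b A C) : IsTerminalPair G D b a C A :=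
  ⟨h.2, h.1, h.3.symm, h.5, h.4, h.7, h.6⟩

lemma IsTerminalPair.mono (h : IsTerminalPair G D a b A C) (hD : D ⊆ D') :
    IsTerminalPair G D' a b A C :=
  { h with left_subset := h.left_subset.trans hD, right_subset := h.right_subset.trans hD }

lemma IsSeriesLink.symm (h : IsSeriesLink G D S₁ S₂ a b A C E) :
    IsSeriesLink G D S₂ S₁ b a E C A where
  toIsTerminalPair := h.toIsTerminalPair.symm
  middle_connected := h.middle_connected
  middle_subset := h.middle_subset
  left_disjoint_middle := h.right_disjoint_middle
  right_disjoint_middle := h.left_disjoint_middle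
  setAdj := h.setAdj.symm
  attaches_left := h.attaches_right
  attaches_right := h.attaches_left

lemma HasSeriesLink.symm : HasSeriesLink G D S₁ S₂ a b → HasSeriesLink G D S₂ S₁ b a :=
  fun ⟨A, C, E, h⟩ => ⟨E, C, A, h.symm⟩

namespace IsTwoConnectedOn

lemma isTerminalPair_singleton (h : IsTwoConnectedOn G B) (ha : a ∈ B) (hb : b ∈ B) (hab : a ≠ b) :
    IsTerminalPair G B a b {a} (B \ {a}) :=
  ⟨by simpa using ha, Set.sdiff_subset, Set.disjoint_sdiff_right, .singleton a,
    h.sdiff_singleton a, rfl, hb, hab.symm⟩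

lemma setAdj_singleton (h : IsTwoConnectedOn G B) (ha : a ∈ B) (hb : b ∈ B) (hab : a ≠ b) :
    SetAdj G {a} (B \ {a}) := by
  obtain ⟨x, hx, y, hy, hxy⟩ :=
    (h.connected.reachableIn ha hb).exists_boundary_adj (R := {a}) rfl hab.symm
  exact ⟨x, hx.2, y, hy, hxy⟩

lemma hasRootedP_zero (h : IsTwoConnectedOn G B) (ha : a ∈ B) (hb : b ∈ B) (hab : a ≠ b) :
    HasRootedP G 0 B a b := by
  obtain ⟨u, hu, v, hv, huv⟩ := h.setAdj_singleton ha hb hab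
  exact ⟨{a}, B \ {a}, B \ {a}, h.isTerminalPair_singleton ha hb hab, Set.sdiff_subset,
    Set.disjoint_sdiff_right, .leaf (h.sdiff_singleton a) ⟨v, hv, u, hu, huv⟩⟩

lemma hasRootedQ_zero (h : IsTwoConnectedOn G B) (ha : a ∈ B) (hb : b ∈ B) (hab : a ≠ b) :
    HasRootedQ G 0 B a b :=
  ⟨{a}, B \ {a}, h.isTerminalPair_singleton ha hb hab,
    .zero (.inl (h.setAdj_singleton ha hb hab))⟩

end IsTwoConnectedOn

lemma IsTerminalPair.union_of_isTerminalPair (h : IsTerminalPair G (B \ B₁) a b A C)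
    (h₁ : IsTerminalPair G B₁ x y A' C') (hB₁ : B₁ ⊆ B) (hx : x ∈ neighborhood G A)
    (hy : y ∈ neighborhood G C) : IsTerminalPair G B a b (A ∪ A') (C ∪ C') where
  left_subset := Set.union_subset (h.left_subset.trans Set.sdiff_subset)
    (h₁.left_subset.trans hB₁)
  right_subset := Set.union_subset (h.right_subset.trans Set.sdiff_subset)
    (h₁.right_subset.trans hB₁)
  disjoint := by
    simp only [Set.disjoint_union_left, Set.disjoint_union_right]
    exact ⟨⟨h.disjoint, (Set.disjoint_sdiff_left.mono h.right_subset h₁.left_subset).symm⟩,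
      Set.disjoint_sdiff_left.mono h.left_subset h₁.right_subset, h₁.disjoint⟩
  left_connected := h.left_connected.union_of_setAdj h₁.left_connected
    (setAdj_of_mem_neighborhood hx h₁.left_mem)
  right_connected := h.right_connected.union_of_setAdj h₁.right_connected
    (setAdj_of_mem_neighborhood hy h₁.right_mem)
  left_mem := .inl h.left_mem
  right_mem := .inl h.right_mem

lemma HasRootedQ.symm (h : HasRootedQ G j B a b) : HasRootedQ G j B b a :=
  let ⟨A, C, hAC, hQ⟩ := h
  ⟨C, A, hAC.symm, Set.union_comm A C ▸ hQ.symm⟩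

lemma HasRootedP.lift (h : HasRootedP G i B₁ x y) (hB₁ : B₁ ⊆ B)
    (hAC : IsTerminalPair G (B \ B₁) a b A C) (hx : x ∈ neighborhood G A)
    (hy : y ∈ neighborhood G C) : HasRootedP G i B a b := by
  obtain ⟨A', T, R, hA'R, hTB₁, hA'T, hT⟩ := h
  have hpair := hAC.union_of_isTerminalPair hA'R hB₁ hx hy
  have hdisj {Y : Set V} (hY : Y ⊆ B \ B₁) : Disjoint Y T :=
    Set.disjoint_sdiff_left.mono hY hTB₁
  have hR : (C ∪ R) ∩ T ⊆ R := by
    rw [Set.union_inter_distrib_right, (hdisj hAC.right_subset).inter_eq, Set.empty_union]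
    exact Set.inter_subset_left
  have hT' := (hT.mono_leaves (Set.inter_subset_left.trans
    (neighborhood_mono (Set.subset_union_right (s := A))))).enlarge_root
    hpair.right_connected Set.subset_union_right hR
  refine ⟨A ∪ A', C ∪ R ∪ T, C ∪ R, hpair,
    Set.union_subset hpair.right_subset (hTB₁.trans hB₁), ?_, hT'⟩
  exact Set.disjoint_union_right.2 ⟨hpair.disjoint,
    Set.disjoint_union_left.2 ⟨hdisj hAC.left_subset, hA'T⟩⟩

lemma HasRootedQ.lift (h : HasRootedQ G j B₁ x y) (hB₁ : B₁ ⊆ B)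
    (hAC : IsTerminalPair G (B \ B₁) a b A C) (hx : x ∈ neighborhood G A)
    (hy : y ∈ neighborhood G C) : HasRootedQ G j B a b := by
  obtain ⟨A', C', hA'C', hQ⟩ := h
  refine ⟨_, _, hAC.union_of_isTerminalPair hA'C' hB₁ hx hy,
    hQ.mono ?_ Set.subset_union_right Set.subset_union_right⟩
  grind [hAC.left_subset, hAC.right_subset]

lemma HasRootedP.succ {S : Bool → Set V} {x y : Bool → V}
    (h : ∀ c, HasRootedP G i (S c) (x c) (y c)) (hS : ∀ c, S c ⊆ B)
    (hdisj : ∀ c, Disjoint (S c) (S !c)) (hAC : IsTerminalPair G (B \ ⋃ c, S c) a b A C)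
    (hx : ∀ c, x c ∈ neighborhood G A) (hy : ∀ c, y c ∈ neighborhood G C) :
    HasRootedP G (i + 1) B a b := by
  choose A' T R hA'R hTS hA'T hT using h
  have houter {c : Bool} {X Y : Set V} (hX : X ⊆ B \ ⋃ c, S c) (hY : Y ⊆ S c) : Disjoint X Y :=
    Set.disjoint_sdiff_left.mono hX (hY.trans (Set.subset_iUnion S c))
  have hA'T' c d : Disjoint (A' c) (T d) := by
    obtain rfl | rfl := Bool.eq_or_eq_not d c
    exacts [hA'T d, ((hdisj c).mono (hA'R c).left_subset (hTS _))]
  have hpair : IsTerminalPair G B a b (A ∪ ⋃ c, A' c) C :=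
    { left_subset := Set.union_subset (hAC.left_subset.trans Set.sdiff_subset)
        (Set.iUnion_subset fun c => (hA'R c).left_subset.trans (hS c))
      right_subset := hAC.right_subset.trans Set.sdiff_subset
      disjoint := Set.disjoint_union_left.2 ⟨hAC.disjoint, Set.disjoint_iUnion_left.2 fun c =>
        (houter hAC.right_subset (hA'R c).left_subset).symm⟩
      left_connected := hAC.left_connected.union_iUnion_of_setAdj
        (fun c => (hA'R c).left_connected)
        fun c => setAdj_of_mem_neighborhood (hx c) (hA'R c).left_mem
      right_connected := hAC.right_connected
      left_mem := .inl hAC.left_mem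
      right_mem := hAC.right_mem }
  have hleaves c : IsBinaryTree G (neighborhood G (A ∪ ⋃ c, A' c)) i (T c) (R c) :=
    (hT c).mono_leaves (Set.inter_subset_left.trans (neighborhood_mono
      ((Set.subset_iUnion A' c).trans Set.subset_union_right)))
  refine ⟨A ∪ ⋃ c, A' c, C ∪ ⋃ c, T c, C, hpair, Set.union_subset hpair.right_subset
    (Set.iUnion_subset fun c => (hTS c).trans (hS c)), ?_,
    .node hAC.right_connected hleaves (fun c => houter hAC.right_subset (hTS c))
      (fun c => (hdisj c).mono (hTS c) (hTS !c))
      fun c => setAdj_of_mem_neighborhood (hy c) (hA'R c).right_mem⟩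
  simp only [Set.disjoint_union_left, Set.disjoint_union_right, Set.disjoint_iUnion_left,
    Set.disjoint_iUnion_right]
  exact ⟨⟨hAC.disjoint, fun c => (houter hAC.right_subset (hA'R c).left_subset).symm⟩,
    fun d => ⟨houter hAC.left_subset (hTS d), fun c => hA'T' c d⟩⟩

lemma HasParallelLink.hasRooted {S : Bool → Set V}
    (h : HasParallelLink G (B \ ⋃ c, S c) S a b) (hS : ∀ c, S c ⊆ B)
    (hdisj : ∀ c, Disjoint (S c) (S !c)) (hrich : ∀ c, IsRich G i j (S c)) :
    HasRootedP G (i + 1) B a b ∨ HasRootedQ G j B a b := by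
  obtain ⟨A, C, hAC, hattach⟩ := h
  choose x hx y hy hxy using hattach
  by_cases hQ : ∃ c, HasRootedQ G j (S c) (x c) (y c)
  · obtain ⟨c, hc⟩ := hQ
    exact .inr (hc.lift (hS c) (hAC.mono (Set.sdiff_subset_sdiff_right (Set.subset_iUnion S c)))
      (hx c).2 (hy c).2)
  · push Not at hQ
    have hP c := (hrich c (hx c).1 (hy c).1 (hxy c)).resolve_right (hQ c)
    exact .inl (.succ hP hS hdisj hAC (fun c => (hx c).2) fun c => (hy c).2)

lemma IsSeriesLink.isTerminalPair_left (h : IsSeriesLink G D S₁ S₂ a b A C E)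
    (hD : D ⊆ B \ (S₁ ∪ S₂)) (hS₂ : S₂ ⊆ B) (hS : Disjoint S₁ S₂) (hconn : ConnectedOn G S₂) :
    IsTerminalPair G (B \ S₁) a b A (C ∪ S₂ ∪ E) := by
  have hDS₁ : D ⊆ B \ S₁ := hD.trans (Set.sdiff_subset_sdiff_right Set.subset_union_left)
  have hDS₂ : Disjoint D S₂ :=
    (Set.subset_sdiff.1 hD).2.mono_right Set.subset_union_right
  obtain ⟨z, hz, w, hw, -⟩ := h.attaches_right
  exact
  { left_subset := h.left_subset.trans hDS₁
    right_subset := Set.union_subset (Set.union_subset (h.middle_subset.trans hDS₁)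
      (Set.subset_sdiff.2 ⟨hS₂, hS.symm⟩)) (h.right_subset.trans hDS₁)
    disjoint := by
      simp only [Set.disjoint_union_right]
      exact ⟨⟨h.left_disjoint_middle, hDS₂.mono_left h.left_subset⟩, h.disjoint⟩
    left_connected := h.left_connected
    right_connected := (h.middle_connected.union_of_setAdj hconn
      (setAdj_of_mem_neighborhood hw.2 hw.1)).union_of_setAdj h.right_connected
      ((setAdj_of_mem_neighborhood hz.2 hz.1).symm.mono Set.subset_union_right subset_rfl)
    left_mem := h.left_mem
    right_mem := .inr h.right_mem }

lemma IsTerminalPair.of_left (h : IsTerminalPair G D a b A C) (h' : IsTerminalPair G D b a A' C')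
    (hAA' : Disjoint A A') : IsTerminalPair G D a b A A' :=
  { left_subset := h.left_subset
    right_subset := h'.left_subset
    disjoint := hAA'
    left_connected := h.left_connected
    right_connected := h'.left_connected
    left_mem := h.left_mem
    right_mem := h'.left_mem }

lemma IsSeriesLink.hasRootedQ_succ (h : IsSeriesLink G D S₁ S₂ a b A C E)
    (hD : D ⊆ B \ (S₁ ∪ S₂)) (hS₁ : S₁ ⊆ B) (hS₂ : S₂ ⊆ B) (hS : Disjoint S₁ S₂)
    (hconn₁ : ConnectedOn G S₁) (hconn₂ : ConnectedOn G S₂)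
    (h₁ : HasRootedQ G j S₁ x y) (h₂ : HasRootedQ G j S₂ u v)
    (hx : x ∈ neighborhood G A) (hy : y ∈ neighborhood G C)
    (hu : u ∈ neighborhood G E) (hv : v ∈ neighborhood G C) :
    HasRootedQ G (j + 1) B a b := by
  obtain ⟨A₁, C₁, hp₁, hQ₁⟩ := h₁
  obtain ⟨E₂, C₂, hp₂, hQ₂⟩ := h₂
  have hleft := (h.isTerminalPair_left hD hS₂ hS hconn₂).union_of_isTerminalPair hp₁ hS₁ hx
    (neighborhood_mono (by grind) hy)
  have hright := (h.symm.isTerminalPair_left (Set.union_comm S₁ S₂ ▸ hD) hS₁ hS.symm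
    hconn₁).union_of_isTerminalPair hp₂ hS₂ hu (neighborhood_mono (by grind) hv)
  have hpair : IsTerminalPair G B a b (A ∪ A₁) (E ∪ E₂) :=
    hleft.of_left hright (hleft.disjoint.mono_right (by grind [hp₂.left_subset]))
  have hmiddle : IsMiddle G (B \ ((A ∪ A₁) ∪ (E ∪ E₂))) (C ∪ C₁ ∪ C₂)
      fun c => cond c (S₂ \ (E₂ ∪ C₂)) (S₁ \ (A₁ ∪ C₁)) :=
    { connected := (h.middle_connected.union_of_setAdj hp₁.right_connected
        (setAdj_of_mem_neighborhood hy hp₁.right_mem)).union_of_setAdj hp₂.right_connected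
        ((setAdj_of_mem_neighborhood hv hp₂.right_mem).mono Set.subset_union_left subset_rfl)
      subset := by
        grind [hleft.disjoint, hright.disjoint, hp₁.right_subset,
          hp₂.right_subset, hleft.right_subset]
      side_subset := by
        grind [h.left_subset, h.right_subset, hp₁.left_subset, hp₂.left_subset]
      disjoint_side := by
        grind [h.middle_subset, hp₁.right_subset, hp₂.right_subset]
      disjoint := by
        grind }
  refine ⟨_, _, hpair, .succ hmiddle ?_ ?_⟩
  · obtain hadj | hadj := h.setAdj
    · exact ⟨false, hadj.mono Set.subset_union_left (by grind)⟩
    · exact ⟨true, hadj.mono Set.subset_union_left (by grind)⟩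
  · rintro (_ | _)
    · exact hQ₁.mono subset_rfl Set.subset_union_right (by grind)
    · exact hQ₂.mono subset_rfl Set.subset_union_right (by grind)

lemma IsSeriesLink.hasRootedP_left (h : IsSeriesLink G D S₁ S₂ a b A C E)
    (hD : D ⊆ B \ (S₁ ∪ S₂)) (hS₁ : S₁ ⊆ B) (hS₂ : S₂ ⊆ B) (hS : Disjoint S₁ S₂)
    (hconn : ConnectedOn G S₂) (h₁ : HasRootedP G i S₁ x y) (hx : x ∈ neighborhood G A)
    (hy : y ∈ neighborhood G C) : HasRootedP G i B a b :=
  h₁.lift hS₁ (h.isTerminalPair_left hD hS₂ hS hconn) hx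
    (neighborhood_mono (Set.subset_union_left.trans Set.subset_union_left) hy)

lemma IsSeriesLink.hasRootedP_right (h : IsSeriesLink G D S₁ S₂ a b A C E)
    (hD : D ⊆ B \ (S₁ ∪ S₂)) (hS₁ : S₁ ⊆ B) (hS₂ : S₂ ⊆ B) (hS : Disjoint S₁ S₂)
    (hconn : ConnectedOn G S₁) (h₂ : HasRootedP G i S₂ x y) (hx : x ∈ neighborhood G C)
    (hy : y ∈ neighborhood G E) : HasRootedP G i B a b :=
  h₂.lift hS₂ (h.symm.isTerminalPair_left (Set.union_comm S₁ S₂ ▸ hD) hS₁ hS.symm hconn).symm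
    (neighborhood_mono (Set.subset_union_left.trans Set.subset_union_left) hx) hy

lemma HasSeriesLink.hasRooted (h : HasSeriesLink G D S₁ S₂ a b) (hD : D ⊆ B \ (S₁ ∪ S₂))
    (hS₁ : S₁ ⊆ B) (hS₂ : S₂ ⊆ B) (hS : Disjoint S₁ S₂) (hconn₁ : ConnectedOn G S₁)
    (hconn₂ : ConnectedOn G S₂) (hrich₁ : IsRich G i j S₁) (hrich₂ : IsRich G i j S₂) :
    HasRootedP G i B a b ∨ HasRootedQ G (j + 1) B a b := by
  obtain ⟨A, C, E, h⟩ := h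
  obtain ⟨x, hx, y, hy, hxy⟩ := h.attaches_left
  obtain ⟨u, hu, v, hv, huv⟩ := h.attaches_right
  obtain h₁ | h₁ := hrich₁ hx.1 hy.1 hxy
  · exact .inl (h.hasRootedP_left hD hS₁ hS₂ hS hconn₂ h₁ hx.2 hy.2)
  obtain h₂ | h₂ := hrich₂ hv.1 hu.1 huv.symm
  · exact .inl (h.hasRootedP_right hD hS₁ hS₂ hS hconn₁ h₂ hv.2 hu.2)
  · exact .inr (h.hasRootedQ_succ hD hS₁ hS₂ hS hconn₁ hconn₂ h₁ h₂.symm hx.2 hy.2 hu.2 hv.2)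

end RootedModel

/-! ### Linking and uncrossing -/

section Linking

variable {V : Type*} {G : SimpleGraph V} {A C D K L₁ L₂ M M₁ M₂ P P' R₁ R₂ S S₁ S₂ W W' X Y : Set V}
  {a b e q q' u v : V}

lemma exists_left_part (hP : ConnectedOn G P) (ha : a ∈ P) (haS : a ∉ S) (hPS : (P ∩ S).Nonempty) :
    ∃ L ⊆ P \ S, ConnectedOn G L ∧ a ∈ L ∧ (P ∩ S ∩ neighborhood G L).Nonempty := by
  obtain ⟨z, hz, hzS⟩ := hPS
  have haPS : a ∈ P \ S := ⟨ha, haS⟩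
  obtain ⟨x, ⟨-, hx⟩, y, ⟨hyP, hy⟩, hxy⟩ := (hP.reachableIn ha hz).exists_boundary_adj
    (R := {x | ReachableIn G (P \ S) a x}) (.refl haPS) fun h => h.right_mem.2 hzS
  have hyS : y ∈ S := by
    by_contra hyS
    exact hy (ReachableIn.step hx hxy ⟨hyP, hyS⟩)
  exact ⟨_, fun _ h => h.right_mem, .component haPS, .refl haPS, y, ⟨hyP, hyS⟩, x, hx, hxy⟩

lemma exists_isTerminalPair_of_disjoint (hP : ConnectedOn G P) (hP' : ConnectedOn G P')
    (hPP' : Disjoint P P') (hPD : P ⊆ D) (hP'D : P' ⊆ D) (ha : a ∈ P) (hb : b ∈ P') (haS : a ∉ S)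
    (hbS : b ∉ S) (hPS : (P ∩ S).Nonempty) (hP'S : (P' ∩ S).Nonempty) :
    ∃ A C, IsTerminalPair G (D \ S) a b A C ∧ AttachesTo G A C S := by
  obtain ⟨A, hAP, hA, haA, x, hx, hxA⟩ := exists_left_part hP ha haS hPS
  obtain ⟨C, hCP', hC, hbC, y, hy, hyC⟩ := exists_left_part hP' hb hbS hP'S
  exact ⟨A, C, ⟨hAP.trans (Set.sdiff_subset_sdiff_left hPD),
    hCP'.trans (Set.sdiff_subset_sdiff_left hP'D),
    hPP'.mono (hAP.trans Set.sdiff_subset) (hCP'.trans Set.sdiff_subset), hA, hC, haA, hbC⟩,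
    x, ⟨hx.2, hxA⟩, y, ⟨hy.2, hyC⟩, hPP'.ne_of_mem hx.1 hy.1⟩

theorem exists_isTerminalPair_attachesTo [Finite V] (hab : a ≠ b) (ha : a ∉ S) (hb : b ∉ S)
    (h : ∀ v, ∃ x ∈ S, ∃ y ∈ ({a, b} : Set V), ReachableIn G (D \ {v}) x y) :
    ∃ A C, IsTerminalPair G (D \ S) a b A C ∧ AttachesTo G A C S := by
  have : Nonempty V := ⟨a⟩
  have hsep (T : Finset V) (hT : Separates G D S {a, b} T) : 2 ≤ T.card := by
    by_contra! hcard
    obtain ⟨v, hv⟩ := Finset.card_le_one_iff_subset_singleton.1 (Nat.lt_succ_iff.1 hcard)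
    obtain ⟨x, hx, y, hy, hxy⟩ := h v
    exact not_separates.2 ⟨x, hx, y, hy, hxy.mono (Set.sdiff_subset_sdiff_right (by
      simpa using Finset.coe_subset.2 hv))⟩ hT
  obtain ⟨P, hP⟩ := exists_isConnectorFamily hsep
  have hdisj : Disjoint (P 0) (P 1) := hP.disjoint zero_ne_one
  obtain ⟨y, hy, rfl | rfl⟩ := hP.meets_right 0 <;> obtain ⟨z, hz, rfl | rfl⟩ := hP.meets_right 1
  · exact (Set.disjoint_left.1 hdisj hy hz).elim
  · exact exists_isTerminalPair_of_disjoint (hP.connected 0) (hP.connected 1) hdisj (hP.subset 0)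
      (hP.subset 1) hy hz ha hb (hP.meets_left 0) (hP.meets_left 1)
  · exact exists_isTerminalPair_of_disjoint (hP.connected 1) (hP.connected 0) hdisj.symm
      (hP.subset 1) (hP.subset 0) hz hy ha hb (hP.meets_left 1) (hP.meets_left 0)
  · exact (Set.disjoint_left.1 hdisj hy hz).elim

lemma exists_isTerminalPair_support (p : G.Walk u v) (hp : p.IsPath) (hq : q ∈ p.support)
    (hq' : q' ∈ p.support) (hne : q ≠ q') :
    ∃ X Y, IsTerminalPair G {x | x ∈ p.support} u v X Y ∧ SetAdj G X Y ∧
      (q ∈ X ∧ q' ∈ Y ∨ q' ∈ X ∧ q ∈ Y) := by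
  induction p with
  | nil => simp_all
  | @cons u w v huw p ih =>
    rw [Walk.cons_isPath_iff] at hp
    rw [Walk.support_cons, List.mem_cons] at hq hq'
    have hsupport : {x | x ∈ (Walk.cons huw p).support} = {u} ∪ {x | x ∈ p.support} := by
      ext
      simp
    have hup : Disjoint {u} {x | x ∈ p.support} := Set.disjoint_singleton_left.2 hp.2
    rw [hsupport]
    by_cases hu : u = q ∨ u = q'
    · exact ⟨{u}, {x | x ∈ p.support}, ⟨Set.subset_union_left, Set.subset_union_right, hup,
        .singleton u, .walk_support p, rfl, p.end_mem_support⟩,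
        ⟨u, rfl, w, p.start_mem_support, huw⟩, by grind⟩
    · obtain ⟨X, Y, hXY, hadj, hqq'⟩ := ih hp.1 (by grind) (by grind)
      exact ⟨{u} ∪ X, Y, ⟨Set.union_subset_union_right {u} hXY.left_subset,
        hXY.right_subset.trans Set.subset_union_right,
        Set.disjoint_union_left.2 ⟨hup.mono_right hXY.right_subset, hXY.disjoint⟩,
        (ConnectedOn.singleton u).union_of_setAdj hXY.left_connected ⟨u, rfl, w, hXY.left_mem, huw⟩,
        hXY.right_connected, .inl rfl, hXY.right_mem⟩,
        hadj.mono Set.subset_union_right subset_rfl, by grind⟩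

/-- The connected sets `W` and `W'` lead from `S` to the vertices `q` and `q'` of `M`, and meet `M`
nowhere else. -/
structure IsTailPair (G : SimpleGraph V) (D M S : Set V) (q q' : V) (W W' : Set V) : Prop
    extends IsTerminalPair G D q q' W W' where
  left_inter : W ∩ M = {q}
  right_inter : W' ∩ M = {q'}
  attaches : AttachesTo G W W' S

lemma IsTerminalPair.exists_isTailPair (h : IsTerminalPair G D a b R₁ R₂)
    (hS : AttachesTo G R₁ R₂ S) (ha : a ∈ M) (hb : b ∈ M) :
    ∃ q q' W W', IsTailPair G D M S q q' W W' := by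
  obtain ⟨x, ⟨hxS, f, hf, hfx⟩, y, ⟨hyS, g, hg, hgy⟩, hxy⟩ := hS
  obtain ⟨q, hq, W, hWR, hW, hfW, hqW, hWM⟩ :=
    (h.left_connected.reachableIn hf h.left_mem).exists_connectedOn_first_hit ha
  obtain ⟨q', hq', W', hWR', hW', hgW', hqW', hWM'⟩ :=
    (h.right_connected.reachableIn hg h.right_mem).exists_connectedOn_first_hit hb
  refine ⟨q, q', W, W', ⟨⟨hWR.trans h.left_subset, hWR'.trans h.right_subset,
    h.disjoint.mono hWR hWR', hW, hW', hqW, hqW'⟩, ?_, ?_,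
    x, ⟨hxS, f, hfW, hfx⟩, y, ⟨hyS, g, hgW', hgy⟩, hxy⟩⟩
  · refine Set.Subset.antisymm (fun z hz => ?_) (Set.singleton_subset_iff.2 ⟨hqW, hq⟩)
    exact of_not_not fun hne => (hWM z hz.1 hne).right_mem.2 hz.2
  · refine Set.Subset.antisymm (fun z hz => ?_) (Set.singleton_subset_iff.2 ⟨hqW', hq'⟩)
    exact of_not_not fun hne => (hWM' z hz.1 hne).right_mem.2 hz.2

lemma IsTerminalPair.exists_isPath (h : IsTerminalPair G D a b L₁ L₂)
    (hS : AttachesTo G L₁ L₂ S) :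
    ∃ (e e' : V) (p : G.Walk a e) (p' : G.Walk b e'), p.IsPath ∧ p'.IsPath ∧
      IsTerminalPair G D a b {x | x ∈ p.support} {x | x ∈ p'.support} ∧
      AttachesTo G {e} {e'} S := by
  classical
  obtain ⟨x, ⟨hxS, e, he, hex⟩, y, ⟨hyS, e', he', hey⟩, hxy⟩ := hS
  obtain ⟨p, hp⟩ := h.left_connected.reachableIn h.left_mem he
  obtain ⟨p', hp'⟩ := h.right_connected.reachableIn h.right_mem he'
  have hL₁ : {x | x ∈ p.bypass.support} ⊆ L₁ :=
    fun x hx => hp x (p.support_bypass_subset_support hx)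
  have hL₂ : {x | x ∈ p'.bypass.support} ⊆ L₂ :=
    fun x hx => hp' x (p'.support_bypass_subset_support hx)
  exact ⟨e, e', p.bypass, p'.bypass, p.bypass_isPath, p'.bypass_isPath,
    ⟨hL₁.trans h.left_subset, hL₂.trans h.right_subset, h.disjoint.mono hL₁ hL₂,
      .walk_support _, .walk_support _, Walk.start_mem_support _, Walk.start_mem_support _⟩,
    x, ⟨hxS, e, rfl, hex⟩, y, ⟨hyS, e', rfl, hey⟩, hxy⟩

namespace IsTailPair

lemma symm (h : IsTailPair G D M S q q' W W') : IsTailPair G D M S q' q W' W :=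
  ⟨h.toIsTerminalPair.symm, h.right_inter, h.left_inter, h.attaches.symm⟩

lemma ne (h : IsTailPair G D M S q q' W W') : q ≠ q' :=
  h.disjoint.ne_of_mem h.left_mem h.right_mem

lemma disjoint_left (h : IsTailPair G D M S q q' W W') (hK : K ⊆ M) (hq : q ∉ K) :
    Disjoint K W :=
  Set.disjoint_left.2 fun _ hxK hxW => hq (h.left_inter.le ⟨hxW, hK hxK⟩ ▸ hxK)

lemma isTerminalPair_union (h : IsTailPair G D (M₁ ∪ M₂) S q q' W W')
    (hM : IsTerminalPair G D a b M₁ M₂) (hq : q ∈ M₁) (hq' : q' ∈ M₂) :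
    IsTerminalPair G D a b (M₁ ∪ W) (M₂ ∪ W') where
  left_subset := Set.union_subset hM.left_subset h.left_subset
  right_subset := Set.union_subset hM.right_subset h.right_subset
  disjoint := by
    simp only [Set.disjoint_union_left, Set.disjoint_union_right]
    exact ⟨⟨hM.disjoint,
      (h.disjoint_left Set.subset_union_right (Set.disjoint_left.1 hM.disjoint hq)).symm⟩,
      h.symm.disjoint_left Set.subset_union_left (Set.disjoint_right.1 hM.disjoint hq'),
      h.disjoint⟩
  left_connected := hM.left_connected.union_of_inter_nonempty h.left_connected ⟨q, hq, h.left_mem⟩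
  right_connected :=
    hM.right_connected.union_of_inter_nonempty h.right_connected ⟨q', hq', h.right_mem⟩
  left_mem := .inl hM.left_mem
  right_mem := .inl hM.right_mem

lemma isSeriesLink (h : IsTailPair G D (M₁ ∪ M₂) S₂ q q' W W')
    (hM : IsTerminalPair G D a b M₁ M₂) (hXY : IsTerminalPair G M₁ a e X Y) (hadj : SetAdj G X Y)
    (hS₁ : AttachesTo G Y M₂ S₁) (hq : q ∈ X) (hq' : q' ∈ Y) :
    IsSeriesLink G D S₂ S₁ a b (X ∪ W) (Y ∪ W') M₂ where
  left_subset := Set.union_subset (hXY.left_subset.trans hM.left_subset) h.left_subset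
  right_subset := hM.right_subset
  disjoint := Set.disjoint_union_left.2 ⟨hM.disjoint.mono_left hXY.left_subset,
    (h.disjoint_left Set.subset_union_right
      (Set.disjoint_left.1 hM.disjoint (hXY.left_subset hq))).symm⟩
  left_connected := hXY.left_connected.union_of_inter_nonempty h.left_connected ⟨q, hq, h.left_mem⟩
  right_connected := hM.right_connected
  left_mem := .inl hXY.left_mem
  right_mem := hM.right_mem
  middle_connected :=
    hXY.right_connected.union_of_inter_nonempty h.right_connected ⟨q', hq', h.right_mem⟩
  middle_subset := Set.union_subset (hXY.right_subset.trans hM.left_subset) h.right_subset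
  left_disjoint_middle := by
    simp only [Set.disjoint_union_left, Set.disjoint_union_right]
    exact ⟨⟨hXY.disjoint, (h.disjoint_left (hXY.right_subset.trans Set.subset_union_left)
      (Set.disjoint_left.1 hXY.disjoint hq)).symm⟩,
      h.symm.disjoint_left (hXY.left_subset.trans Set.subset_union_left)
        (Set.disjoint_right.1 hXY.disjoint hq'), h.disjoint⟩
  right_disjoint_middle := Set.disjoint_union_right.2 ⟨hM.disjoint.symm.mono_right hXY.right_subset,
    h.symm.disjoint_left Set.subset_union_right
      (Set.disjoint_left.1 hM.disjoint (hXY.right_subset hq'))⟩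
  setAdj := .inl (hadj.mono Set.subset_union_left Set.subset_union_left)
  attaches_left := h.attaches.mono Set.subset_union_right Set.subset_union_right
  attaches_right := hS₁.symm.mono subset_rfl Set.subset_union_left

lemma hasSeriesLink {p : G.Walk a e} (h : IsTailPair G D ({x | x ∈ p.support} ∪ M₂) S₂ q q' W W')
    (hM : IsTerminalPair G D a b {x | x ∈ p.support} M₂) (hp : p.IsPath) (hq : q ∈ p.support)
    (hq' : q' ∈ p.support) (hS₁ : AttachesTo G {e} M₂ S₁) : HasSeriesLink G D S₂ S₁ a b := by
  obtain ⟨X, Y, hXY, hadj, ⟨hqX, hqY⟩ | ⟨hqX, hqY⟩⟩ :=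
    exists_isTerminalPair_support p hp hq hq' h.ne
  all_goals have hS₁Y := hS₁.mono (Set.singleton_subset_iff.2 hXY.right_mem) subset_rfl
  · exact ⟨_, _, _, h.isSeriesLink hM hXY hadj hS₁Y hqX hqY⟩
  · exact ⟨_, _, _, h.symm.isSeriesLink hM hXY hadj hS₁Y hqX hqY⟩

end IsTailPair

/-- Fix paths through the first pair, and follow the second pair from `S true` until it first meets
these paths. Whether its two tails end on different paths or on the same one decides between the
parallel and the series configuration. -/
theorem hasParallelLink_or_hasSeriesLink {S : Bool → Set V}
    (hL : IsTerminalPair G D a b L₁ L₂) (hLS : AttachesTo G L₁ L₂ (S false))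
    (hR : IsTerminalPair G D a b R₁ R₂) (hRS : AttachesTo G R₁ R₂ (S true)) :
    HasParallelLink G D S a b ∨ ∃ c, HasSeriesLink G D (S c) (S !c) a b := by
  obtain ⟨e, e', p, p', hp, hp', hM, hS⟩ := hL.exists_isPath hLS
  obtain ⟨q, q', W, W', hW⟩ := hR.exists_isTailPair hRS
    (M := {x | x ∈ p.support} ∪ {x | x ∈ p'.support}) (.inl hM.left_mem) (.inr hM.right_mem)
  have hep : {e} ⊆ {x | x ∈ p.support} := Set.singleton_subset_iff.2 p.end_mem_support
  have hep' : {e'} ⊆ {x | x ∈ p'.support} := Set.singleton_subset_iff.2 p'.end_mem_support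
  have hpar {q q' W W'} (hW : IsTailPair G D ({x | x ∈ p.support} ∪ {x | x ∈ p'.support}) (S true)
      q q' W W') (hq : q ∈ p.support) (hq' : q' ∈ p'.support) : HasParallelLink G D S a b :=
    ⟨_, _, hW.isTerminalPair_union hM hq hq', Bool.forall_bool.2
      ⟨hS.mono (hep.trans Set.subset_union_left) (hep'.trans Set.subset_union_left),
        hW.attaches.mono Set.subset_union_right Set.subset_union_right⟩⟩
  obtain hq | hq := (hW.left_inter.ge rfl).2 <;> obtain hq' | hq' := (hW.right_inter.ge rfl).2
  · exact .inr ⟨true, hW.hasSeriesLink hM hp hq hq' (hS.mono subset_rfl hep')⟩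
  · exact .inl (hpar hW hq hq')
  · exact .inl (hpar hW.symm hq' hq)
  · exact .inr ⟨false, ((Set.union_comm _ _ ▸ hW).hasSeriesLink hM.symm hp' hq hq'
      (hS.symm.mono subset_rfl hep)).symm⟩

end Linking

/-! ### Two-connected subsets spanned by tall trees -/

section TwoConnected

variable {V : Type*} {G : SimpleGraph V} {B E L R R' S X Y Z : Set V} {a b v : V} {i j k n : ℕ}

/-- The connected set `X \ Y` separates `Y` from the connected set `B \ X` inside `B`. -/
structure IsCollared (G : SimpleGraph V) (B X Y : Set V) : Prop where
  subset : X ⊆ B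
  inner_subset : Y ⊆ X
  outer_connected : ConnectedOn G (B \ X)
  collar_connected : ConnectedOn G (X \ Y)
  disjoint : Disjoint Y (neighborhood G (B \ X))

lemma IsCollared.not_adj {x y : V} (h : IsCollared G B X Y) (hx : x ∈ B \ X) (hy : y ∈ Y) :
    ¬ G.Adj x y :=
  fun hxy => Set.disjoint_left.1 h.disjoint hy ⟨x, hx, hxy⟩

namespace IsBinaryTree

lemma inter_leaves_nonempty (h : IsBinaryTree G L n X R) : (X ∩ L).Nonempty := by
  induction h with
  | leaf _ h => exact h
  | @node _ _ T _ _ _ _ _ _ ih =>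
    exact (ih true).mono (Set.inter_subset_inter_left L fun x hx =>
      .inr (Set.mem_iUnion_of_mem true hx))

lemma exists_children (h : IsBinaryTree G L (n + 1) X R) :
    ∃ T S : Bool → Set V, (∀ c, IsBinaryTree G L n (T c) (S c)) ∧
      (∀ c, Disjoint (T c) (T !c)) ∧ ∀ c, IsProperSubtree G X R (T c) (S c) := by
  cases h with | @node _ _ T S hR hT hRT hTT hRS =>
  exact ⟨T, S, hT, hTT, isProperSubtree_child hR hT hRT hTT hRS⟩

lemma exists_isSubtree_notMem (h : IsBinaryTree G Set.univ (n + 1) X R) (a : V) :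
    ∃ Y R', IsBinaryTree G Set.univ n Y R' ∧ a ∉ Y ∧ IsSubtree G X R Y R' := by
  obtain ⟨R', -, hleaves⟩ | ⟨Y, R', hY, hYa, hsub⟩ := h.exists_leaves_or_exists_subtree {a}
  · obtain ⟨T, _, hT, hTT, -⟩ := hleaves.exists_children
    have ha c : a ∈ T c := Set.inter_singleton_nonempty.1 (hT c).inter_leaves_nonempty
    exact (Set.disjoint_left.1 (hTT true) (ha _) (ha _)).elim
  · exact ⟨Y, R', hY, Set.disjoint_singleton_right.1 hYa, hsub⟩

lemma exists_isCollared (h : IsBinaryTree G Set.univ (n + k) X R)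
    (hP : ¬ IsMinor (Pgraph k) G) (hX : IsProperSubtree G B L X R) :
    ∃ Y R', IsBinaryTree G Set.univ n Y R' ∧ IsCollared G B X Y ∧ IsProperSubtree G B L Y R' := by
  obtain ⟨R', -, hleaves⟩ | ⟨Y, R', hY, hYX, hsub⟩ :=
    h.exists_leaves_or_exists_subtree (neighborhood G (B \ X))
  · exact (hP (hleaves.isMinor_Pgraph hX.sdiff_connected Set.disjoint_sdiff_left)).elim
  have hproper := hX.trans_isSubtree hsub
  obtain ⟨rfl, rfl⟩ | hsub := hsub
  · obtain ⟨u, hu, v, hv, huv⟩ := hX.setAdj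
    exact (Set.disjoint_left.1 hYX (h.root_subset hv) ⟨u, hu, huv⟩).elim
  · exact ⟨Y, R', hY, ⟨hX.subset, hsub.subset, hX.sdiff_connected, hsub.sdiff_connected, hYX⟩,
      hproper⟩

end IsBinaryTree

namespace IsTwoConnectedOn

lemma nontrivial (h : IsTwoConnectedOn G B) : B.Nontrivial := by
  obtain ⟨x, hx⟩ := h.connected.nonempty
  obtain ⟨y, hy, hyx⟩ := (h.sdiff_singleton x).nonempty
  exact ⟨y, hy, x, hx, hyx⟩

lemma connectedOn_sdiff_singleton (hB : IsTwoConnectedOn G B) (h : IsCollared G B X Y)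
    (hv : v ∈ Y) : ConnectedOn G (X \ {v}) := by
  refine (hB.sdiff_singleton v).of_sdiff_closed h.collar_connected
    (Set.sdiff_subset_sdiff_right (Set.singleton_subset_iff.2 hv))
    (Set.sdiff_subset_sdiff_left h.subset) fun x hx y hy hxy => ⟨?_, hy.2⟩
  by_contra hyX
  have hxY : x ∈ Y := by_contra fun hxY => hx.2 ⟨hx.1.1, hxY⟩
  exact h.not_adj ⟨hy.1, hyX⟩ hxY hxy.symm

lemma connectedOn_sdiff_sdiff_singleton (hB : IsTwoConnectedOn G B) (h : IsCollared G B X Y)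
    (hv : v ∉ X) : ConnectedOn G ((B \ Y) \ {v}) := by
  refine (hB.sdiff_singleton v).of_sdiff_closed h.collar_connected ?_
    (Set.sdiff_subset_sdiff_left Set.sdiff_subset)
    fun x hx y hy hxy => ⟨⟨hy.1, fun hyY => ?_⟩, hy.2⟩
  · exact fun x hx => ⟨⟨h.subset hx.1, hx.2⟩, fun hxv => hv (hxv ▸ hx.1)⟩
  · exact h.not_adj ⟨hx.1.1.1, fun hxX => hx.2 ⟨hxX, hx.1.1.2⟩⟩ hyY hxy

lemma exists_reachableIn (hB : IsTwoConnectedOn G B) (h : IsCollared G B X Y) (hS : S.Nontrivial)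
    (hSB : S ⊆ B \ X) (hE : E.Nontrivial) (hEB : E ⊆ B \ X) (v : V) :
    ∃ x ∈ S, ∃ y ∈ E, ReachableIn G ((B \ Y) \ {v}) x y := by
  obtain ⟨x, hx, hxv⟩ := hS.exists_ne v
  obtain ⟨y, hy, hyv⟩ := hE.exists_ne v
  refine ⟨x, hx, y, hy, ?_⟩
  have hXY : B \ X ⊆ B \ Y := Set.sdiff_subset_sdiff_right h.inner_subset
  by_cases hv : v ∈ X
  · refine (h.outer_connected.reachableIn (hSB hx) (hEB hy)).mono fun z hz => ⟨hXY hz, ?_⟩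
    exact fun hzv => hz.2 (hzv ▸ hv)
  · exact (hB.connectedOn_sdiff_sdiff_singleton h hv).reachableIn ⟨hXY (hSB hx), hxv⟩
      ⟨hXY (hEB hy), hyv⟩

end IsTwoConnectedOn

/-- A minimal set `S` with `Z ⊆ S ⊆ Y` inheriting the hypotheses on `Y` is 2-connected: if
`v ∈ S \ Z`, then `v` together with the component of `S \ {v}` containing `Z` is another such
set, so it is all of `S`. -/
lemma exists_isTwoConnectedOn [Finite V] (hY : ConnectedOn G Y) (hZ : ConnectedOn G Z)
    (hZY : Z ⊆ Y) (h : ∀ v ∈ Z, ConnectedOn G (Y \ {v})) :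
    ∃ S ⊆ Y, Z ⊆ S ∧ IsTwoConnectedOn G S := by
  obtain ⟨S, hSY, hS⟩ := Finite.exists_le_minimal
    (p := fun S : Set V => Z ⊆ S ∧ ConnectedOn G S ∧ ∀ v ∈ Z, ConnectedOn G (S \ {v}))
    ⟨hZY, hY, h⟩
  obtain ⟨hZS, hSconn, hSZ⟩ := hS.prop
  refine ⟨S, hSY, hZS, hSconn, fun v => ?_⟩
  by_cases hvZ : v ∈ Z
  · exact hSZ v hvZ
  by_cases hvS : v ∉ S
  · rwa [Set.sdiff_singleton_eq_self hvS]
  rw [not_not] at hvS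
  obtain ⟨z, hz⟩ := hZ.nonempty
  have hZv : Z ⊆ S \ {v} := Set.subset_sdiff_singleton hZS hvZ
  set K := {x | ReachableIn G (S \ {v}) z x}
  have hKv : K ⊆ S \ {v} := fun x hx => ReachableIn.right_mem hx
  have hZK : Z ⊆ K := fun x hx => (hZ.reachableIn hz hx).mono hZv
  have hclosed : ∀ x ∈ insert v K \ {v}, ∀ y ∈ S, G.Adj x y → y ∈ insert v K := by
    rintro x ⟨hx, hxv⟩ y hy hxy
    refine or_iff_not_imp_left.2 fun hyv => ?_
    exact ReachableIn.step (hx.resolve_left hxv) hxy ⟨hy, hyv⟩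
  have hKS : insert v K ⊆ S := Set.insert_subset hvS (hKv.trans Set.sdiff_subset)
  have hSK : S ⊆ insert v K := by
    refine hS.le_of_le ⟨hZK.trans (Set.subset_insert _ _), ?_, fun w hw => ?_⟩ hKS
    · exact hSconn.of_sdiff_closed (.singleton v) (by simp) hKS hclosed
    · refine (hSZ w hw).of_sdiff_closed (.singleton v) ?_ (Set.sdiff_subset_sdiff_left hKS) ?_
      · simpa using fun hvw : v = w => hvZ (hvw ▸ hw)
      · exact fun x hx y hy hxy => ⟨hclosed x ⟨hx.1.1, hx.2⟩ y hy.1 hxy, hy.2⟩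
  have hSv : S \ {v} = K := by grind
  exact hSv ▸ .component (hZv hz)

lemma IsTwoConnectedOn.exists_isCollared [Finite V] (hB : IsTwoConnectedOn G B)
    (hP : ¬ IsMinor (Pgraph k) G) (h : IsBinaryTree G Set.univ (n + k + k + 2) X R)
    (hX : IsProperSubtree G B L X R) (a b : V) :
    ∃ X' Y S R', X' ⊆ X \ {a, b} ∧ IsCollared G B X' Y ∧ S ⊆ Y ∧ IsTwoConnectedOn G S ∧
      IsBinaryTree G Set.univ n S R' := by
  obtain ⟨X₁, R₁, h₁, ha, hsub₁⟩ := h.exists_isSubtree_notMem a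
  obtain ⟨X₂, R₂, h₂, hb, hsub₂⟩ := h₁.exists_isSubtree_notMem b
  have hX₂ := (hX.trans_isSubtree hsub₁).trans_isSubtree hsub₂
  obtain ⟨Y, R₃, hY, hcollar, hYB⟩ := h₂.exists_isCollared hP hX₂
  obtain ⟨Z, R₄, hZ, hcollar', -⟩ := hY.exists_isCollared hP hYB
  obtain ⟨S, hSY, hZS, hS⟩ := exists_isTwoConnectedOn hY.connected hZ.connected
    hcollar'.inner_subset fun v hv => hB.connectedOn_sdiff_singleton hcollar' hv
  obtain ⟨R', -, hR'⟩ := hZ.exists_spanning hS.connected hZS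
  refine ⟨X₂, Y, S, R', ?_, hcollar, hSY, hS, hR'⟩
  refine Set.subset_sdiff.2 ⟨hsub₂.subset.trans hsub₁.subset, ?_⟩
  simpa using ⟨fun haX => ha (hsub₂.subset haX), hb⟩

theorem IsTwoConnectedOn.hasParallelLink_or_hasSeriesLink [Finite V] (hB : IsTwoConnectedOn G B)
    (hP : ¬ IsMinor (Pgraph k) G) (h : IsBinaryTree G Set.univ (n + k + k + 3) B R)
    (ha : a ∈ B) (hb : b ∈ B) (hab : a ≠ b) :
    ∃ S : Bool → Set V, (∀ c, S c ⊆ B) ∧ (∀ c, Disjoint (S c) (S !c)) ∧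
      (∀ c, IsTwoConnectedOn G (S c) ∧ ∃ R', IsBinaryTree G Set.univ n (S c) R') ∧
      (HasParallelLink G (B \ ⋃ c, S c) S a b ∨
        ∃ c, HasSeriesLink G (B \ ⋃ c, S c) (S c) (S !c) a b) := by
  obtain ⟨T, _, hT, hTT, hTB⟩ := h.exists_children
  choose X Y S R' hXT hcollar hSY hS hS' using fun c =>
    hB.exists_isCollared hP (hT c) (hTB c) a b
  have hSX c : S c ⊆ X c := (hSY c).trans (hcollar c).inner_subset
  have hSB c : S c ⊆ B := (hSX c).trans (hcollar c).subset
  have hXX c : Disjoint (X c) (X !c) :=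
    (hTT c).mono ((hXT c).trans Set.sdiff_subset) ((hXT _).trans Set.sdiff_subset)
  have habX c : Disjoint {a, b} (X c) := (Set.subset_sdiff.1 (hXT c)).2.symm
  have hlink c : ∃ A C, IsTerminalPair G (B \ ⋃ c, S c) a b A C ∧ AttachesTo G A C (S c) := by
    have hreach := hB.exists_reachableIn (hcollar !c) (hS c).nontrivial
      (Set.subset_sdiff.2 ⟨hSB c, (hXX c).mono_left (hSX c)⟩) (Set.nontrivial_pair hab)
      (Set.subset_sdiff.2 ⟨Set.pair_subset ha hb, habX !c⟩)
    have habS := (habX c).mono_right (hSX c)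
    rw [Set.disjoint_insert_left, Set.disjoint_singleton_left] at habS
    obtain ⟨A, C, hAC, hACS⟩ := exists_isTerminalPair_attachesTo hab habS.1 habS.2 hreach
    refine ⟨A, C, hAC.mono ?_, hACS⟩
    rintro x ⟨⟨hxB, hxY⟩, hxS⟩
    refine ⟨hxB, fun hx => ?_⟩
    obtain ⟨d, hd⟩ := Set.mem_iUnion.1 hx
    have := @hSY (!c) x
    cases c <;> cases d <;> grind
  obtain ⟨L₁, L₂, hL, hLS⟩ := hlink false
  obtain ⟨R₁, R₂, hR, hRS⟩ := hlink true
  exact ⟨S, hSB, fun c => (hXX c).mono (hSX c) (hSX _), fun c => ⟨hS c, R' c, hS' c⟩,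
    _root_.hasParallelLink_or_hasSeriesLink hL hLS hR hRS⟩

theorem IsTwoConnectedOn.isRich [Finite V] (hP : ¬ IsMinor (Pgraph k) G) :
    ∀ {i j : ℕ} {B R : Set V}, IsTwoConnectedOn G B →
      IsBinaryTree G Set.univ ((2 * k + 3) * (i + j)) B R → IsRich G i j B
  | 0, _, _, _, hB, _ => fun _ ha _ hb hab => .inl (hB.hasRootedP_zero ha hb hab)
  | _ + 1, 0, _, _, hB, _ => fun _ ha _ hb hab => .inr (hB.hasRootedQ_zero ha hb hab)
  | i + 1, j + 1, B, R, hB, h => fun a ha b hb hab => by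
    have hheight : (2 * k + 3) * (i + 1 + (j + 1)) = (2 * k + 3) * (i + j + 1) + k + k + 3 := by
      ring
    rw [hheight] at h
    obtain ⟨S, hSB, hSS, hS, hlink⟩ := hB.hasParallelLink_or_hasSeriesLink hP h ha hb hab
    choose hS R' hR' using hS
    obtain hlink | ⟨c, hlink⟩ := hlink
    · refine hlink.hasRooted hSB hSS fun c => isRich hP (hS c) (R := R' c) ?_
      exact add_assoc i j 1 ▸ hR' c
    · have hrich d : IsRich G (i + 1) j (S d) :=
        isRich hP (hS d) (R := R' d) (add_right_comm i j 1 ▸ hR' d)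
      refine hlink.hasRooted (Set.sdiff_subset_sdiff_right (Set.union_subset ?_ ?_)) (hSB _)
        (hSB _) (hSS c) (hS _).connected (hS _).connected (hrich _) (hrich _)
      all_goals exact Set.subset_iUnion S _
  termination_by i j => i + j

lemma HasRootedP.isMinor_Pgraph (h : HasRootedP G k B a b) : IsMinor (Pgraph k) G :=
  let ⟨_, _, _, hAR, _, hAT, hT⟩ := h
  hT.isMinor_Pgraph hAR.left_connected hAT

lemma HasRootedQ.isMinor_Qgraph (h : HasRootedQ G (2 * k + 1) B a b) : IsMinor (Qgraph k) G :=
  let ⟨_, _, hAC, hQ⟩ := h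
  hQ.isMinor_Qgraph ⟨hAC.left_connected, hAC.right_connected, hAC.disjoint,
    Set.disjoint_sdiff_right.mono_left Set.subset_union_left,
    Set.disjoint_sdiff_right.mono_left Set.subset_union_right⟩

lemma isTwoConnectedOn_univ_of_isKConnected [Fintype V] (hG : IsKConnected 2 G) :
    IsTwoConnectedOn G Set.univ where
  connected := by
    have := hG.2 ∅ (by simp)
    rwa [Finset.coe_empty, Set.compl_empty] at this
  sdiff_singleton v := by
    have := hG.2 {v} (by simp)
    rwa [Finset.coe_singleton, Set.compl_eq_univ_sdiff] at this

end TwoConnected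

theorem two_connected_bounded_treewidth_large_pathwidth_has_Pk_or_Qk_minor_general (k : ℕ)
    {V : Type*} [Fintype V] {G : SimpleGraph V} (hG : IsKConnected 2 G)
    (hp : 2 ^ ((2 * k + 3) * (k + (2 * k + 1)) + 1) - 1 ≤ pathwidth G) :
    IsMinor (Pgraph k) G ∨ IsMinor (Qgraph k) G := by
  refine or_iff_not_imp_left.2 fun hP => ?_
  have hV : IsTwoConnectedOn G Set.univ := isTwoConnectedOn_univ_of_isKConnected hG
  obtain ⟨T, R, hT⟩ := exists_isBinaryTree_of_le_pathwidth hp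
  obtain ⟨R', -, hspan⟩ := hT.exists_spanning hV.connected (Set.subset_univ T)
  obtain ⟨a, ha, b, hb, hab⟩ := hV.nontrivial
  obtain h | h := hV.isRich hP hspan ha hb hab
  · exact (hP h.isMinor_Pgraph).elim
  · exact h.isMinor_Qgraph

/-- Lemma 7.8. For all positive integers `k` and `w` there is a number
`p` such that every 2-connected graph of tree-width less than `w` and path-width at least
`p` has a `𝒫_k` or `𝒬_k` minor. -/
theorem two_connected_bounded_treewidth_large_pathwidth_has_Pk_or_Qk_minor
    (k w : ℕ) (hk : 0 < k) (hw : 0 < w) :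
    ∃ p : ℕ, ∀ (V : Type) [Fintype V] (G : SimpleGraph V),
      IsKConnected 2 G → treewidth G < w → p ≤ pathwidth G →
        IsMinor (Pgraph k) G ∨ IsMinor (Qgraph k) G :=
  ⟨_, fun _ _ _ hG _ hp =>
    two_connected_bounded_treewidth_large_pathwidth_has_Pk_or_Qk_minor_general k hG hp⟩
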